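/- Let α be a partition with all parts at least 2 and ℓ(α) ≥ 3, and let R_α be the connected ribbon with row lengths α. If α has full equivalence class, then R_α has full Schur support, i.e. [R_α] = [α, (|α|−ℓ(α)+1, ℓ(α)−1)] in dominance order. Moreover, when ℓ(α) ≤ 4, α has full equivalence class if and only if R_α has full Schur support. -/

import Mathlib

namespace RibbonSupport

/-- A partition: a weakly decreasing list of positive integers. -/
def IsPartition (a : List ℕ) : Prop := a.Pairwise (· ≥ ·) ∧ ∀ x ∈ a, 0 < x

/-- All parts of the list are at least `m`. -/
def PartsGE (a : List ℕ) (m : ℕ) : Prop := ∀ x ∈ a, m ≤ x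

/-- Dominance order `lam ⪯ mu` on partitions of the same size. -/
def DomLE (lam mu : List ℕ) : Prop :=
  lam.sum = mu.sum ∧ ∀ i, (lam.take i).sum ≤ (mu.take i).sum

/-- The number of nonzero parts. -/
def lenp (p : List ℕ) : ℕ := p.countP (fun x => decide (x ≠ 0))

/-- `p` is an overlapping partition for the monotone ribbon with row lengths `a`:
`p` has the same length as `a`, its last entry is `0`, and consecutive entries
decrease by `0` or `1`. -/
def IsOverlapSeq (a p : List ℕ) : Prop :=
  p.length = a.length ∧ p.getD (a.length - 1) 0 = 0 ∧
    ∀ i, i + 1 < a.length →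
      p.getD i 0 = p.getD (i + 1) 0 ∨ p.getD i 0 = p.getD (i + 1) 0 + 1

/-- Rows `i` and `i+1` (0-based, top to bottom) of `R_a^p` overlap
(share exactly one column) exactly when `p_i = p_{i+1} + 1`. -/
def ovOf (p : List ℕ) : ℕ → Bool := fun i => decide (p.getD i 0 = p.getD (i + 1) 0 + 1)

def rowOffset (a : List ℕ) (i : ℕ) : ℕ := (a.take i).sum

/-- `w` is the reading word (rows right-to-left, top to bottom) of a semistandard filling of
the ribbon with row lengths `a` (top to bottom) in which consecutive rows `i`, `i+1` share
exactly one column when `ov i = true` and no column otherwise.  Semistandardness amounts to: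
within each row block the word is weakly decreasing (rows weakly increase left to right), and
at each overlapping gap the word strictly increases (columns strictly increase downwards). -/
def IsRibbonWord (a : List ℕ) (ov : ℕ → Bool) (w : List ℕ) : Prop :=
  w.length = a.sum ∧
  (∀ i j, i < a.length → j + 1 < a.getD i 0 →
    w.getD (rowOffset a i + j + 1) 0 ≤ w.getD (rowOffset a i + j) 0) ∧
  (∀ i, i + 1 < a.length → ov i = true →
    w.getD (rowOffset a (i + 1) - 1) 0 < w.getD (rowOffset a (i + 1)) 0)

/-- Yamanouchi (lattice) word: each prefix has at least as many letters `j` as `j+1`. -/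
def IsYam (w : List ℕ) : Prop := ∀ k j, (w.take k).count (j + 2) ≤ (w.take k).count (j + 1)

/-- The word `w` has content `nu` (and only positive letters). -/
def HasContent (w : List ℕ) (nu : List ℕ) : Prop :=
  (∀ j, w.count (j + 1) = nu.getD j 0) ∧ w.count 0 = 0

/-- There is an LR filling of the ribbon `(a, ov)` with content `nu`. -/
def InSupportOv (a : List ℕ) (ov : ℕ → Bool) (nu : List ℕ) : Prop :=
  ∃ w : List ℕ, IsRibbonWord a ov w ∧ IsYam w ∧ HasContent w nu

/-- `nu` is in the Schur support of the monotone ribbon `R_a^p`. -/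
def InSupport (a p nu : List ℕ) : Prop := InSupportOv a (ovOf p) nu

/-- `nu` is in the Schur support of the connected ribbon `R_a`. -/
def InSupportConn (a nu : List ℕ) : Prop := InSupportOv a (fun _ => true) nu

/-- `nu` belongs to the Schur interval `[a, (|a| - p₁, p₁)]` in dominance order. -/
def InInterval (a p nu : List ℕ) : Prop :=
  DomLE a nu ∧ DomLE nu [a.sum - p.getD 0 0, p.getD 0 0]

/-- The Schur support of `R_a^p`, as a set of partitions. -/
def SupportSet (a p : List ℕ) : Set (List ℕ) := {nu | IsPartition nu ∧ InSupport a p nu}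

/-- The Schur interval of `R_a^p`, as a set of partitions. -/
def IntervalSet (a p : List ℕ) : Set (List ℕ) := {nu | IsPartition nu ∧ InInterval a p nu}

/-- `R_a^p` has full Schur support. -/
def FullSupport (a p : List ℕ) : Prop := SupportSet a p = IntervalSet a p

/-- The Schur support of the connected ribbon `R_a`, as a set of partitions. -/
def SupportSetConn (a : List ℕ) : Set (List ℕ) := {nu | IsPartition nu ∧ InSupportConn a nu}

/-- `ϱ_i` (1-based `i`): `Σ_{q=i+1}^{ℓ(a)} a_q − p_{i+1} + 1`. -/
def rho (a p : List ℕ) (i : ℕ) : ℕ := (a.drop i).sum + 1 - p.getD i 0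

/-- Entry `j` (1-based) of the `i`-witness vector: `[ϱ_i − a_j]₊`. -/
def wit (a p : List ℕ) (i j : ℕ) : ℕ := rho a p i - a.getD (j - 1) 0

/-- Size of the `i`-witness vector. -/
def witSize (a p : List ℕ) (i : ℕ) : ℕ := ∑ j ∈ Finset.Icc 1 i, wit a p i j

/-! ### Tableaux -/

/-- Cells (0-based `(row, column)`) of the Young diagram of `lam`. -/
def cells (lam : List ℕ) : Finset (ℕ × ℕ) :=
  (Finset.range lam.length ×ˢ Finset.range (lam.sum + 1)).filter
    (fun x => x.2 < lam.getD x.1 0)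

/-- `T` is a semistandard Young tableau of shape `lam` and content `al`
(normalized to vanish off the diagram). -/
def IsTab (lam al : List ℕ) (T : ℕ × ℕ → ℕ) : Prop :=
  (∀ x, x ∉ cells lam → T x = 0) ∧
  (∀ x ∈ cells lam, 1 ≤ T x) ∧
  (∀ i c, (i, c + 1) ∈ cells lam → T (i, c) ≤ T (i, c + 1)) ∧
  (∀ i c, (i + 1, c) ∈ cells lam → T (i, c) < T (i + 1, c)) ∧
  (∀ k, ((cells lam).filter (fun x => T x = k + 1)).card = al.getD k 0)

/-- Standardization of a tableau: entries are renumbered `1, …, N` in increasing order of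
value, entries of equal value being numbered from southwest to northeast (by column). -/
def stdz (lam : List ℕ) (T : ℕ × ℕ → ℕ) : ℕ × ℕ → ℕ := fun x =>
  if x ∈ cells lam then
    ((cells lam).filter (fun y => T y < T x ∨ (T y = T x ∧ y.2 < x.2))).card + 1
  else 0

/-- `n` is a descent of the standard tableau `U`: the entry `n+1` lies in a strictly
lower row than the entry `n`. -/
def IsDescent (lam : List ℕ) (U : ℕ × ℕ → ℕ) (n : ℕ) : Prop :=
  ∃ x ∈ cells lam, ∃ y ∈ cells lam, U x = n ∧ U y = n + 1 ∧ x.1 < y.1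

/-- `S(al)`: the set of proper partial sums of the composition `al`. -/
def Sset (al : List ℕ) : Set ℕ := {n | ∃ k, 0 < k ∧ k < al.length ∧ n = (al.take k).sum}

/-- `s ∈ D(T)`: some entry `s+1` of `T` lies in a strictly lower row than some entry `s`. -/
def TabDescent (lam : List ℕ) (T : ℕ × ℕ → ℕ) (s : ℕ) : Prop :=
  ∃ x ∈ cells lam, ∃ y ∈ cells lam, T x = s ∧ T y = s + 1 ∧ x.1 < y.1

/-- The word `w_{T̂}` of `T`: its `u`-th letter (1-based) is the 1-based row index of the
entry `u` of the standardization `T̂` of `T`. -/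
def wordOf (lam : List ℕ) (T : ℕ × ℕ → ℕ) : List ℕ :=
  (List.range lam.sum).map fun n =>
    ∑ x ∈ (cells lam).filter (fun x => stdz lam T x = n + 1), (x.1 + 1)

/-- `j ∈ {2, …, ℓ(al)}` is a critical number of `T ∈ Tab(lam, al)`:
`w_{α_1+⋯+α_{j-1}} = w_{α_1+⋯+α_{j-1}+1}` in the word of `T`. -/
def CriticalNum (lam al : List ℕ) (T : ℕ × ℕ → ℕ) (j : ℕ) : Prop :=
  2 ≤ j ∧ j ≤ al.length ∧
    (wordOf lam T).getD ((al.take (j - 1)).sum - 1) 0 =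
      (wordOf lam T).getD ((al.take (j - 1)).sum) 0

/-- `j ∈ {2, …, ℓ(al)}` is a negligible critical number of `T`:
`w_{α_1+⋯+α_{j-1}} > w_{α_1+⋯+α_{j-1}+1}` in the word of `T`. -/
def NegligibleNum (lam al : List ℕ) (T : ℕ × ℕ → ℕ) (j : ℕ) : Prop :=
  2 ≤ j ∧ j ≤ al.length ∧
    (wordOf lam T).getD ((al.take (j - 1)).sum) 0 <
      (wordOf lam T).getD ((al.take (j - 1)).sum - 1) 0

/-- The overlapping partition of the ribbon encoded by its gap pattern `b`
(`b j = true` iff rows `j` and `j+1`, 0-based, overlap). -/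
def povOf (b : List Bool) : List ℕ :=
  (List.range (b.length + 1)).map fun i => (b.drop i).count true

/-! ### Connected ribbons with rows in arbitrary order -/

/-- Starting column (0-based) of row `i` of the connected ribbon with row lengths `b`. -/
def startConn (b : List ℕ) (i : ℕ) : ℕ := (b.drop (i + 1)).sum + (i + 1) - b.length

/-- Number of columns of the connected ribbon with row lengths `b`. -/
def ncols (b : List ℕ) : ℕ := b.sum + 1 - b.length

/-- Length of column `c` of the connected ribbon with row lengths `b`. -/
def colLen (b : List ℕ) (c : ℕ) : ℕ :=
  ((Finset.range b.length).filter
    (fun i => startConn b i ≤ c ∧ c < startConn b i + b.getD i 0)).card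

/-- Deletion rank of row `j`: the number of rows deleted strictly before row `j` when one
repeatedly deletes a longest remaining row in highest (most northern) position. -/
def delRank (g : List ℕ) (j : ℕ) : ℕ :=
  ((Finset.range g.length).filter
    (fun j' => g.getD j 0 < g.getD j' 0 ∨ (g.getD j' 0 = g.getD j 0 ∧ j' < j))).card

/-- The overlapping partition of the connected ribbon with row lengths `g`:
its `(d+1)`-st entry is the number of length-two columns of the ribbon remaining
after deleting `d` rows as above, i.e. the number of adjacent pairs of surviving rows. -/
def ppiList (g : List ℕ) : List ℕ :=
  (List.range g.length).map fun d =>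
    ((Finset.range (g.length - 1)).filter
      (fun j => d ≤ delRank g j ∧ d ≤ delRank g (j + 1))).card


/-- The connected ribbon `R_a` has full Schur support
`[a, (|a|−ℓ(a)+1, ℓ(a)−1)]` in dominance order. -/
def FullSupportConn (a : List ℕ) : Prop :=
  SupportSetConn a =
    {nu | IsPartition nu ∧ DomLE a nu ∧ DomLE nu [a.sum - (a.length - 1), a.length - 1]}

/-- `a` has full equivalence class: every rearrangement of the rows of the connected ribbon
`R_a` has the same Schur support. -/
def FullEquivClass (a : List ℕ) : Prop :=
  ∀ b : List ℕ, b.Perm a → SupportSetConn b = SupportSetConn a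



/-! ### Words and chains of horizontal strips -/

lemma getD_app_left {w u : List ℕ} {k : ℕ} (h : k < w.length) :
    (w ++ u).getD k 0 = w.getD k 0 := by
  simp [List.getD_eq_getElem?_getD, List.getElem?_append_left h]

lemma getD_app_right {w u : List ℕ} {k n : ℕ} (h : w.length = n) :
    (w ++ u).getD (n + k) 0 = u.getD k 0 := by
  subst h
  rw [List.getD_eq_getElem?_getD, List.getD_eq_getElem?_getD,
    List.getElem?_append_right (by omega)]
  simp

lemma rowOffset_app {a : List ℕ} {x i : ℕ} (h : i ≤ a.length) :
    rowOffset (a ++ [x]) i = rowOffset a i := by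
  simp [rowOffset, List.take_append_of_le_length h]

lemma rowOffset_succ {a : List ℕ} {i : ℕ} (h : i < a.length) :
    rowOffset a (i + 1) = rowOffset a i + a.getD i 0 := by
  unfold rowOffset
  rw [List.sum_take_succ _ _ h, List.getD_eq_getElem _ _ h]

lemma rowOffset_le {a : List ℕ} (i : ℕ) : rowOffset a i ≤ a.sum := by
  have := List.sum_take_add_sum_drop a i
  unfold rowOffset; omega

lemma rowOffset_len (a : List ℕ) : rowOffset a a.length = a.sum := by
  simp [rowOffset]

lemma ribbon_app (a : List ℕ) (x : ℕ) (w u : List ℕ) (hw : w.length = a.sum)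
    (hu : u.length = x) (hpos : ∀ y ∈ a, 0 < y) :
    IsRibbonWord (a ++ [x]) (fun _ => true) (w ++ u) ↔
      IsRibbonWord a (fun _ => true) w ∧
      (∀ j, j + 1 < x → u.getD (j + 1) 0 ≤ u.getD j 0) ∧
      (a ≠ [] → w.getD (a.sum - 1) 0 < u.getD 0 0) := by
  have hgp : ∀ i, i < a.length → 0 < a.getD i 0 := by
    intro i hi
    rw [List.getD_eq_getElem _ _ hi]
    exact hpos _ (List.getElem_mem hi)
  constructor
  · rintro ⟨h1, h2, h3⟩
    refine ⟨⟨hw, ?_, ?_⟩, ?_, ?_⟩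
    · intro i j hi hj
      have e1 := rowOffset_succ hi
      have e2 := rowOffset_le (a := a) (i + 1)
      have := h2 i j (by simp; omega) (by rw [getD_app_left hi]; exact hj)
      rw [rowOffset_app hi.le, getD_app_left (by omega), getD_app_left (by omega)] at this
      exact this
    · intro i hi _
      have e1 := rowOffset_succ (a := a) (i := i) (by omega)
      have e1' := rowOffset_succ (a := a) (i := i + 1) (by omega)
      have e2 := rowOffset_le (a := a) (i + 1 + 1)
      have e3 := hgp i (by omega)
      have e4 := hgp (i + 1) (by omega)
      have := h3 i (by simp; omega) rfl
      rw [rowOffset_app hi.le, getD_app_left (by omega), getD_app_left (by omega)] at this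
      exact this
    · intro j hj
      have := h2 a.length j (by simp) (by
        have : (a ++ [x]).getD (a.length + 0) 0 = x := by rw [getD_app_right rfl]; simp
        simp only [Nat.add_zero] at this
        rw [this]; exact hj)
      rw [rowOffset_app le_rfl, rowOffset_len, add_assoc, getD_app_right hw,
        getD_app_right hw] at this
      exact this
    · intro hne
      have hl : 0 < a.length := List.length_pos_iff.mpr hne
      have e1 := rowOffset_succ (a := a) (i := a.length - 1) (by omega)
      have e3 := hgp (a.length - 1) (by omega)
      have e5 : a.length - 1 + 1 = a.length := by omega
      rw [e5, rowOffset_len] at e1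
      have := h3 (a.length - 1) (by simp; omega) rfl
      rw [e5, rowOffset_app le_rfl, rowOffset_len, getD_app_left (by omega)] at this
      have e6 := getD_app_right (u := u) (k := 0) hw
      simp only [Nat.add_zero] at e6
      rw [e6] at this
      exact this
  · rintro ⟨⟨h1, h2, h3⟩, h4, h5⟩
    refine ⟨by simp [hw, hu], ?_, ?_⟩
    · intro i j hi hj
      rcases Nat.lt_or_ge i a.length with hi' | hi'
      · rw [getD_app_left hi'] at hj
        have e1 := rowOffset_succ hi'
        have e2 := rowOffset_le (a := a) (i + 1)
        rw [rowOffset_app hi'.le, getD_app_left (by omega), getD_app_left (by omega)]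
        exact h2 i j hi' hj
      · have : i = a.length := by simp at hi; omega
        subst this
        have e : (a ++ [x]).getD (a.length + 0) 0 = x := by rw [getD_app_right rfl]; simp
        simp only [Nat.add_zero] at e
        rw [e] at hj
        rw [rowOffset_app le_rfl, rowOffset_len, add_assoc, getD_app_right hw,
          getD_app_right hw]
        exact h4 j hj
    · intro i hi _
      rcases Nat.lt_or_ge (i + 1) a.length with hi' | hi'
      · have e1 := rowOffset_succ (a := a) (i := i) (by omega)
        have e1' := rowOffset_succ (a := a) (i := i + 1) (by omega)
        have e2 := rowOffset_le (a := a) (i + 1 + 1)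
        have e3 := hgp i (by omega)
        have e4 := hgp (i + 1) (by omega)
        rw [rowOffset_app hi'.le, getD_app_left (by omega), getD_app_left (by omega)]
        exact h3 i hi' rfl
      · have e0 : i + 1 = a.length := by simp at hi; omega
        have e1 := rowOffset_succ (a := a) (i := i) (by omega)
        have e3 := hgp i (by omega)
        rw [e0, rowOffset_len] at e1
        have e6 := getD_app_right (u := u) (k := 0) hw
        simp only [Nat.add_zero] at e6
        rw [e0, rowOffset_app le_rfl, rowOffset_len, getD_app_left (by omega), e6]
        exact h5 (by rintro rfl; simp at e0)

/-- There is an LR filling of the connected ribbon `a` of content `nu`, the last letter of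
whose reading word is at most `t + 1`. -/
def Sup (a : List ℕ) (nu : ℕ → ℕ) (t : ℕ) : Prop :=
  ∃ w : List ℕ, IsRibbonWord a (fun _ => true) w ∧ IsYam w ∧
    (∀ j, w.count (j + 1) = nu j) ∧ w.count 0 = 0 ∧ w.getD (a.sum - 1) 0 ≤ t + 1

lemma inSupportConn_iff (a nu : List ℕ) :
    InSupportConn a nu ↔ ∃ t, Sup a (fun j => nu.getD j 0) t := by
  constructor
  · rintro ⟨w, h1, h2, h3, h4⟩
    exact ⟨w.getD (a.sum - 1) 0, w, h1, h2, h3, h4, by omega⟩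
  · rintro ⟨t, w, h1, h2, h3, h4, _⟩
    exact ⟨w, h1, h2, h3, h4⟩

/-- The weakly decreasing word with `h r` letters `r + 1` for `r < n`. -/
def blk : ℕ → (ℕ → ℕ) → List ℕ
  | 0, _ => []
  | n + 1, h => List.replicate (h n) (n + 1) ++ blk n h

lemma blk_mem {n : ℕ} {h : ℕ → ℕ} {y : ℕ} (hy : y ∈ blk n h) : 1 ≤ y ∧ y ≤ n := by
  induction n with
  | zero => simp [blk] at hy
  | succ n ih =>
    simp only [blk, List.mem_append, List.mem_replicate] at hy
    rcases hy with hy | hy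
    · omega
    · have := ih hy; omega

lemma blk_pairwise (n : ℕ) (h : ℕ → ℕ) : (blk n h).Pairwise (· ≥ ·) := by
  induction n with
  | zero => simp [blk]
  | succ n ih =>
    simp only [blk, List.pairwise_append]
    refine ⟨by simp [List.pairwise_replicate], ih, ?_⟩
    intro x hx y hy
    have := blk_mem hy
    simp only [List.mem_replicate] at hx
    omega

lemma blk_length (n : ℕ) (h : ℕ → ℕ) : (blk n h).length = ∑ r ∈ Finset.range n, h r := by
  induction n with
  | zero => simp [blk]
  | succ n ih => simp [blk, ih, Finset.sum_range_succ, add_comm]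

lemma blk_count (n : ℕ) (h : ℕ → ℕ) (j : ℕ) :
    (blk n h).count (j + 1) = if j < n then h j else 0 := by
  induction n with
  | zero => simp [blk]
  | succ n ih =>
    simp only [blk, List.count_append, ih, List.count_replicate]
    rcases lt_trichotomy j n with hj | hj | hj
    · simp [hj, show ¬ (n = j) by omega, show j < n + 1 by omega]
    · subst hj; simp
    · simp [show ¬ (n = j) by omega, show ¬ (j < n + 1) by omega, show ¬ (j < n) by omega]

lemma blk_count_zero (n : ℕ) (h : ℕ → ℕ) : (blk n h).count 0 = 0 := by
  rw [List.count_eq_zero]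
  intro hy
  have := blk_mem hy
  omega

lemma pairwise_getD {u : List ℕ} (hu : u.Pairwise (· ≥ ·)) {i j : ℕ} (hij : i ≤ j)
    (hj : j < u.length) : u.getD j 0 ≤ u.getD i 0 := by
  rcases Nat.eq_or_lt_of_le hij with rfl | hlt
  · exact le_rfl
  · rw [List.getD_eq_getElem _ _ hj, List.getD_eq_getElem _ _ (by omega)]
    exact List.pairwise_iff_getElem.mp hu i j (by omega) hj hlt

lemma pairwise_of_getD {u : List ℕ}
    (h : ∀ j, j + 1 < u.length → u.getD (j + 1) 0 ≤ u.getD j 0) : u.Pairwise (· ≥ ·) := by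
  rw [List.pairwise_iff_getElem]
  intro i j hi hj hij
  induction j, hij using Nat.le_induction with
  | base =>
    have := h i hj
    rwa [List.getD_eq_getElem _ _ hj, List.getD_eq_getElem _ _ hi] at this
  | succ j hij ih =>
    have := h j hj
    rw [List.getD_eq_getElem _ _ hj, List.getD_eq_getElem _ _ (by omega)] at this
    exact le_trans this (ih (by omega))

lemma sup_base {x : ℕ} : Sup [x] (fun r => if r = 0 then x else 0) 0 := by
  refine ⟨List.replicate x 1, ⟨by simp, ?_, ?_⟩, ?_, ?_, ?_, ?_⟩
  · intro i j hi hj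
    simp at hi
    subst hi
    simp only [List.getD_cons_zero] at hj
    simp [rowOffset, List.getD_eq_getElem?_getD, List.getElem?_replicate, hj,
      show j < x by omega]
  · intro i hi; simp at hi
  · intro k j
    simp [List.take_replicate, List.count_replicate]
  · intro j
    rcases Nat.eq_zero_or_pos j with rfl | hj
    · simp
    · simp [List.count_replicate, show j ≠ 0 by omega]
  · simp [List.count_replicate]
  · simp only [List.getD_eq_getElem?_getD, List.getElem?_replicate]
    split_ifs <;> simp

/-- Adding a horizontal strip. -/
lemma sup_step {a : List ℕ} {la nu : ℕ → ℕ} {s t x N b c : ℕ} (h : Sup a la s)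
    (hpos : ∀ y ∈ a, 0 < y) (hle : ∀ r, la r ≤ nu r)
    (hstrip : ∀ r, nu (r + 1) ≤ la r) (hN : ∀ r, N ≤ r → nu r = 0)
    (hsum : ∑ r ∈ Finset.range N, nu r = (∑ r ∈ Finset.range N, la r) + x)
    (hb : s < b) (hb' : la b < nu b) (hc : c ≤ t) (hc' : la c < nu c) :
    Sup (a ++ [x]) nu t := by
  obtain ⟨w, h1, h2, h3, h4, h5⟩ := h
  set u := blk N (fun r => nu r - la r) with hu
  have hbN : b < N := by
    by_contra hcon
    have := hN b (by omega)
    omega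
  have hcN : c < N := by
    by_contra hcon
    have := hN c (by omega)
    omega
  have hulen : u.length = x := by
    rw [hu, blk_length]
    have : ∑ r ∈ Finset.range N, nu r =
        ∑ r ∈ Finset.range N, la r + ∑ r ∈ Finset.range N, (nu r - la r) := by
      rw [← Finset.sum_add_distrib]
      apply Finset.sum_congr rfl
      intro r _
      have := hle r
      omega
    omega
  have hucount : ∀ j, u.count (j + 1) = nu j - la j := by
    intro j
    rw [hu, blk_count]
    split_ifs with hj
    · rfl
    · have := hN j (by omega)
      omega
  have hup : u.Pairwise (· ≥ ·) := blk_pairwise _ _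
  have hbm : b + 1 ∈ u := by
    rw [← List.count_pos_iff, hucount]; omega
  have hcm : c + 1 ∈ u := by
    rw [← List.count_pos_iff, hucount]; omega
  have hx : 0 < x := by rw [← hulen]; exact List.length_pos_of_mem hbm
  refine ⟨w ++ u, ?_, ?_, ?_, ?_, ?_⟩
  · rw [ribbon_app a x w u h1.1 hulen hpos]
    refine ⟨h1, ?_, ?_⟩
    · intro j hj
      exact pairwise_getD hup (by omega) (by omega)
    · intro _
      obtain ⟨k, hk, hk'⟩ := List.getElem_of_mem hbm
      have := pairwise_getD hup (Nat.zero_le k) hk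
      rw [List.getD_eq_getElem _ _ hk, hk'] at this
      omega
  · intro k j
    rw [List.take_append, List.count_append, List.count_append]
    rcases Nat.lt_or_ge k w.length with hk | hk
    · have e : k - w.length = 0 := by omega
      rw [e]
      simpa using h2 k j
    · rw [List.take_of_length_le hk]
      have e0 := h3 j
      have e1 : List.count (j + 1 + 1) w = la (j + 1) := h3 (j + 1)
      have e2 : List.count (j + 1 + 1) (List.take (k - w.length) u) ≤ nu (j + 1) - la (j + 1) := by
        rw [← hucount]
        exact List.Sublist.count_le _ (List.take_sublist _ _)
      have e3 := hle (j + 1)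
      have e4 := hstrip j
      show List.count (j + 1 + 1) w + List.count (j + 1 + 1) (List.take (k - w.length) u) ≤ _
      omega
  · intro j
    rw [List.count_append, h3, hucount]
    have := hle j
    omega
  · rw [List.count_append, h4, hu, blk_count_zero]
  · have e : (a ++ [x]).sum - 1 = a.sum + (x - 1) := by simp; omega
    rw [e, getD_app_right h1.1]
    obtain ⟨k, hk, hk'⟩ := List.getElem_of_mem hcm
    have := pairwise_getD hup (show k ≤ x - 1 by omega) (by omega)
    rw [List.getD_eq_getElem _ _ hk, hk'] at this
    omega

lemma sum_count (w : List ℕ) (N : ℕ) (h : ∀ y ∈ w, 1 ≤ y ∧ y ≤ N) :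
    ∑ r ∈ Finset.range N, w.count (r + 1) = w.length := by
  induction w with
  | nil => simp
  | cons y w ih =>
    have hy := h y (by simp)
    simp only [List.count_cons, Finset.sum_add_distrib, List.length_cons]
    rw [ih (fun z hz => h z (by simp [hz]))]
    congr 1
    rw [Finset.sum_eq_single (y - 1)]
    · simp; omega
    · intro r _ hr
      simp; omega
    · intro hr
      simp at hr; omega

/-- Removing the last strip. -/
lemma sup_elim {a : List ℕ} {nu : ℕ → ℕ} {t x : ℕ} (h : Sup (a ++ [x]) nu t)
    (hpos : ∀ y ∈ a, 0 < y) (hx : 0 < x) (hne : a ≠ []) :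
    ∃ (la : ℕ → ℕ) (s b c N : ℕ), Sup a la s ∧ (∀ r, la r ≤ nu r) ∧
      (∀ r, nu (r + 1) ≤ la r) ∧ (∀ r, N ≤ r → nu r = 0) ∧
      ∑ r ∈ Finset.range N, nu r = (∑ r ∈ Finset.range N, la r) + x ∧
      s < b ∧ la b < nu b ∧ c ≤ t ∧ la c < nu c := by
  obtain ⟨w', h1, h2, h3, h4, h5⟩ := h
  obtain ⟨w, u, hw, hu, rfl⟩ : ∃ w u : List ℕ, w.length = a.sum ∧ u.length = x ∧ w' = w ++ u := by
    refine ⟨w'.take a.sum, w'.drop a.sum, ?_, ?_, by simp⟩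
    · have := h1.1; simp at this; simp; omega
    · have := h1.1; simp at this; simp; omega
  rw [ribbon_app a x w u hw hu hpos] at h1
  obtain ⟨h1, h6, h7⟩ := h1
  have h7 := h7 hne
  have hup : u.Pairwise (· ≥ ·) := pairwise_of_getD (by rw [hu]; exact h6)
  have hposw : ∀ y ∈ w ++ u, 1 ≤ y := by
    intro y hy
    rw [List.count_eq_zero] at h4
    rcases Nat.eq_zero_or_pos y with rfl | h
    · exact absurd hy h4
    · exact h
  obtain ⟨N, hN⟩ : ∃ N, ∀ y ∈ w ++ u, y ≤ N := by
    refine ⟨(w ++ u).sum, fun y hy => List.single_le_sum (by simp) y hy⟩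
  have hapos : 0 < a.sum := by
    obtain ⟨y, l, rfl⟩ := List.exists_cons_of_ne_nil hne
    have := hpos y (by simp)
    simp; omega
  have hs1 : 1 ≤ w.getD (a.sum - 1) 0 := by
    rw [List.getD_eq_getElem _ _ (by omega)]
    exact hposw _ (by simp)
  have hct : ∀ j, nu j = w.count (j + 1) + u.count (j + 1) := by
    intro j; rw [← h3, List.count_append]
  refine ⟨fun r => w.count (r + 1), w.getD (a.sum - 1) 0 - 1, u.getD 0 0 - 1,
    u.getD (x - 1) 0 - 1, N, ⟨w, h1, ?_, fun _ => rfl, ?_, by omega⟩, ?_, ?_, ?_, ?_, ?_, ?_,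
    ?_, ?_⟩
  · intro k j
    rcases Nat.lt_or_ge k w.length with hk | hk
    · have := h2 k j
      rwa [List.take_append_of_le_length hk.le] at this
    · have := h2 w.length j
      rw [List.take_of_length_le hk]
      simpa using this
  · rw [List.count_append] at h4; omega
  · intro r
    show w.count (r + 1) ≤ nu r
    rw [hct]; omega
  · intro r
    show nu (r + 1) ≤ w.count (r + 1)
    have key := h2 (w.length + (u.takeWhile (fun y => decide (r + 2 ≤ y))).length) r
    rw [List.take_length_add_append, List.count_append, List.count_append] at key
    have e : List.take (u.takeWhile (fun y => decide (r + 2 ≤ y))).length u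
        = u.takeWhile (fun y => decide (r + 2 ≤ y)) := by
      conv_lhs => rw [← List.takeWhile_append_dropWhile (p := fun y => decide (r + 2 ≤ y)) (l := u)]
      rw [List.takeWhile_append_dropWhile]
      exact List.prefix_iff_eq_take.mp (List.takeWhile_prefix _) |>.symm
    rw [e] at key
    have e1 : (u.takeWhile (fun y => decide (r + 2 ≤ y))).count (r + 1) = 0 := by
      rw [List.count_eq_zero]
      intro hm
      have := List.mem_takeWhile_imp hm
      simp at this
    have e2 : (u.dropWhile (fun y => decide (r + 2 ≤ y))).count (r + 2) = 0 := by
      rw [List.count_eq_zero]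
      intro hm
      rcases hd : u.dropWhile (fun y => decide (r + 2 ≤ y)) with _ | ⟨z, l⟩
      · rw [hd] at hm; simp at hm
      · have hz : ¬ (r + 2 ≤ z) := by
          have := List.head_dropWhile_not (p := fun y => decide (r + 2 ≤ y)) (l := u)
            (by rw [hd]; simp)
          simp only [hd, List.head_cons] at this
          simpa using this
        have hp : (z :: l).Pairwise (· ≥ ·) := by
          rw [← hd]; exact hup.sublist (List.dropWhile_sublist _)
        rw [hd] at hm
        rw [List.pairwise_cons] at hp
        rcases List.mem_cons.mp hm with h | h
        · omega
        · have := hp.1 _ h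
          omega
    have e3 : u.count (r + 2) = (u.takeWhile (fun y => decide (r + 2 ≤ y))).count (r + 2) := by
      conv_lhs => rw [← List.takeWhile_append_dropWhile (p := fun y => decide (r + 2 ≤ y)) (l := u)]
      rw [List.count_append, e2]; rfl
    rw [hct]
    show w.count (r + 2) + u.count (r + 2) ≤ _
    omega
  · intro r hr
    rw [← h3, List.count_eq_zero]
    intro hm
    have := hN _ hm
    omega
  · have e1 := sum_count (w ++ u) N (fun y hy => ⟨hposw y hy, hN y hy⟩)
    have e2 := sum_count w N (fun y hy => ⟨hposw y (by simp [hy]), hN y (by simp [hy])⟩)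
    simp only [h3, List.length_append] at e1
    rw [e1, e2, hu]
  · omega
  · have hm : u.getD 0 0 ∈ u := by
      rw [List.getD_eq_getElem _ _ (by omega)]; simp
    have h8 : u.getD 0 0 - 1 + 1 = u.getD 0 0 := by omega
    rw [hct]
    simp only [h8]
    have := List.count_pos_iff.mpr hm
    omega
  · have e : (a ++ [x]).sum - 1 = a.sum + (x - 1) := by simp; omega
    rw [e, getD_app_right hw] at h5
    omega
  · have hm : u.getD (x - 1) 0 ∈ u := by
      rw [List.getD_eq_getElem _ _ (by omega)]; simp
    have := hposw _ (List.mem_append_right w hm)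
    have h8 : u.getD (x - 1) 0 - 1 + 1 = u.getD (x - 1) 0 := by omega
    rw [hct]
    simp only [h8]
    have := List.count_pos_iff.mpr hm
    omega



/-! ### Necessary conditions -/

lemma sum_zero_ext {f : ℕ → ℕ} {n m : ℕ} (hn : ∀ r, n ≤ r → f r = 0)
    (hm : ∀ r, m ≤ r → f r = 0) :
    ∑ r ∈ Finset.range n, f r = ∑ r ∈ Finset.range m, f r := by
  have key : ∀ p q, (∀ r, p ≤ r → f r = 0) → p ≤ q →
      ∑ r ∈ Finset.range p, f r = ∑ r ∈ Finset.range q, f r := by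
    intro p q hp hpq
    apply Finset.sum_subset
    · intro r hr; simp at hr ⊢; omega
    · intro r _ hr; simp at hr; exact hp r hr
  rcases le_total n m with h | h
  · exact key n m hn h
  · exact (key m n hm h).symm

lemma sup_nil {nu : ℕ → ℕ} {t : ℕ} (h : Sup [] nu t) : ∀ r, nu r = 0 := by
  obtain ⟨w, h1, _, h3, _⟩ := h
  have : w = [] := by
    have := h1.1
    simpa using this
  subst this
  intro r
  rw [← h3]; simp

lemma sup_single {x : ℕ} {nu : ℕ → ℕ} {t : ℕ} (h : Sup [x] nu t) :
    nu 0 = x ∧ ∀ r, 1 ≤ r → nu r = 0 := by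
  obtain ⟨w, h1, h2, h3, h4, _⟩ := h
  have hl : w.length = x := by simpa using h1.1
  have hp : w.Pairwise (· ≥ ·) := by
    apply pairwise_of_getD
    intro j hj
    have := h1.2.1 0 j (by simp) (by simpa [hl] using hj)
    simpa [rowOffset] using this
  have hle : ∀ y ∈ w, y = 1 := by
    intro y hy
    have hy0 : y ≠ 0 := by
      rintro rfl
      rw [List.count_eq_zero] at h4
      exact h4 hy
    by_contra hy1
    rcases w with _ | ⟨z, w⟩
    · simp at hy
    · have hz : y ≤ z := by
        rcases List.mem_cons.mp hy with h | h
        · omega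
        · exact (List.pairwise_cons.mp hp).1 y h
      have := h2 1 (z - 2)
      have e1 : z - 2 + 2 = z := by omega
      have e2 : z ≠ z - 2 + 1 := by omega
      rw [e1] at this
      simp [e2] at this
  have hw : w = List.replicate x 1 := by
    rw [List.eq_replicate_iff]
    exact ⟨hl, hle⟩
  subst hw
  constructor
  · rw [← h3]; simp
  · intro r hr
    rw [← h3]
    simp [List.count_replicate, show r ≠ 0 by omega]

lemma sup_supp {a : List ℕ} : ∀ {nu : ℕ → ℕ} {t : ℕ}, Sup a nu t → (∀ y ∈ a, 0 < y) →
    (∀ r, a.length ≤ r → nu r = 0) ∧ ∑ r ∈ Finset.range a.length, nu r = a.sum := by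
  induction a using List.reverseRecOn with
  | nil =>
    intro nu t h _
    have := sup_nil h
    simp [this]
  | append_singleton a x ih =>
    intro nu t h hpos
    rcases eq_or_ne a [] with rfl | hne
    · have := sup_single (x := x) (by simpa using h)
      constructor
      · intro r hr
        exact this.2 r (by simpa using hr)
      · simp [this.1]
    · obtain ⟨la, s, b, c, N, h1, h2, h3, h4, h5, _⟩ :=
        sup_elim h (fun y hy => hpos y (by simp [hy])) (hpos x (by simp)) hne
      obtain ⟨i1, i2⟩ := ih h1 (fun y hy => hpos y (by simp [hy]))
      have hz : ∀ r, (a ++ [x]).length ≤ r → nu r = 0 := by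
        intro r hr
        rcases r with _ | r
        · simp at hr
        · simp at hr
          have := h3 r
          have := i1 r hr
          omega
      refine ⟨hz, ?_⟩
      rw [sum_zero_ext hz h4, h5]
      rw [sum_zero_ext (f := la) (n := N) (m := a.length) _ i1, i2]
      · simp
      · intro r hr
        have := h2 r
        have := h4 r hr
        omega

lemma sup_elim2 {a : List ℕ} {nu : ℕ → ℕ} {t x : ℕ} (h : Sup (a ++ [x]) nu t)
    (hpos : ∀ y ∈ a, 0 < y) (hx : 0 < x) (hne : a ≠ []) :
    ∃ (la : ℕ → ℕ) (s b c : ℕ), Sup a la s ∧ (∀ r, la r ≤ nu r) ∧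
      (∀ r, nu (r + 1) ≤ la r) ∧ (∀ r, a.length ≤ r → la r = 0) ∧
      ∑ r ∈ Finset.range a.length, la r = a.sum ∧
      ∑ r ∈ Finset.range (a.length + 1), nu r = a.sum + x ∧
      ∑ r ∈ Finset.range (a.length + 1), (nu r - la r) = x ∧
      s < b ∧ la b < nu b ∧ c ≤ t ∧ la c < nu c ∧ b < a.length + 1 ∧ c < a.length + 1 := by
  obtain ⟨la, s, b, c, N, h1, h2, h3, h4, h5, h6, h7, h8, h9⟩ := sup_elim h hpos hx hne
  have i := sup_supp h (by
    intro y hy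
    rcases List.mem_append.mp hy with hy | hy
    · exact hpos y hy
    · simp at hy; omega)
  have j := sup_supp h1 hpos
  simp only [List.length_append, List.length_singleton, List.sum_append, List.sum_singleton] at i
  refine ⟨la, s, b, c, h1, h2, h3, j.1, j.2, i.2, ?_, h6, h7, h8, h9, ?_, ?_⟩
  · have e : ∑ r ∈ Finset.range (a.length + 1), (nu r - la r) +
        ∑ r ∈ Finset.range (a.length + 1), la r = ∑ r ∈ Finset.range (a.length + 1), nu r := by
      rw [← Finset.sum_add_distrib]
      apply Finset.sum_congr rfl
      intro r _
      have := h2 r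
      omega
    rw [Finset.sum_range_succ la, j.1 _ le_rfl, j.2, i.2] at e
    omega
  · by_contra hb
    have := i.1 b (by omega)
    omega
  · by_contra hb
    have := i.1 c (by omega)
    omega

lemma sup_dom {a : List ℕ} : ∀ {nu : ℕ → ℕ} {t : ℕ}, Sup a nu t → (∀ y ∈ a, 0 < y) →
    ∀ l : List ℕ, l.Sublist a → l.sum ≤ ∑ r ∈ Finset.range l.length, nu r := by
  induction a using List.reverseRecOn with
  | nil =>
    intro nu t h _ l hl
    simp at hl; simp [hl]
  | append_singleton a x ih =>
    intro nu t h hpos l hl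
    rcases eq_or_ne a [] with rfl | hne
    · have := sup_single (x := x) (by simpa using h)
      rcases l with _ | ⟨y, l⟩
      · simp
      · have h' := hl.length_le
        simp at h'
        subst h'
        simp at hl
        simp [this.1, hl]
    · obtain ⟨la, s, b, c, h1, h2, h3, h4, h5, h6, h7, _⟩ :=
        sup_elim2 h (fun y hy => hpos y (by simp [hy])) (hpos x (by simp)) hne
      have ih' := ih h1 (fun y hy => hpos y (by simp [hy]))
      rw [List.sublist_append_iff] at hl
      obtain ⟨l1, l2, rfl, hl1, hl2⟩ := hl
      have i1 := ih' l1 hl1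
      have i2 : ∑ r ∈ Finset.range l1.length, la r ≤ ∑ r ∈ Finset.range l1.length, nu r :=
        Finset.sum_le_sum (fun r _ => h2 r)
      rcases l2 with _ | ⟨y, l2⟩
      · simp; omega
      · have h' := hl2.length_le
        simp at h'
        subst h'
        simp at hl2
        subst hl2
        have tel : ∀ m, l1.length ≤ m → ∑ r ∈ Finset.range (m + 1), nu r +
            ∑ r ∈ Finset.range l1.length, la r ≤ ∑ r ∈ Finset.range (l1.length + 1), nu r +
            ∑ r ∈ Finset.range m, la r := by
          intro m hm
          induction m, hm using Nat.le_induction with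
          | base => exact le_rfl
          | succ m hm ih =>
            rw [Finset.sum_range_succ _ (m + 1), Finset.sum_range_succ la m]
            have := h3 m
            omega
        have := tel a.length hl1.length_le
        simp only [List.length_append, List.length_singleton, List.sum_append, List.sum_singleton]
        omega

lemma le_sum_two {f : ℕ → ℕ} {n i j : ℕ} (hi : i < n) (hj : j < n) (hij : i ≠ j) :
    f i + f j ≤ ∑ r ∈ Finset.range n, f r := by
  rw [← Finset.sum_pair hij]
  apply Finset.sum_le_sum_of_subset
  intro r hr
  simp at hr ⊢
  omega

lemma le_sum_three {f : ℕ → ℕ} {n i j k : ℕ} (hi : i < n) (hj : j < n) (hk : k < n)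
    (hij : i ≠ j) (hik : i ≠ k) (hjk : j ≠ k) :
    f i + (f j + f k) ≤ ∑ r ∈ Finset.range n, f r := by
  rw [← Finset.sum_pair hjk, ← Finset.sum_insert (by simp; omega)]
  apply Finset.sum_le_sum_of_subset
  intro r hr
  simp at hr ⊢
  omega

lemma le_sum_one {f : ℕ → ℕ} {n i : ℕ} (hi : i < n) :
    f i ≤ ∑ r ∈ Finset.range n, f r :=
  Finset.single_le_sum (f := f) (fun _ _ => Nat.zero_le _) (by simpa using hi)

lemma sup_cap {a : List ℕ} : ∀ {nu : ℕ → ℕ} {t : ℕ}, Sup a nu t → (∀ y ∈ a, 0 < y) →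
    ∀ i, i < a.length → nu i + (a.length - 1 - i) ≤ (a.drop i).sum ∧
      (t < i → nu i + (a.length - i) ≤ (a.drop i).sum) := by
  induction a using List.reverseRecOn with
  | nil =>
    intro nu t h _ i hi
    simp at hi
  | append_singleton a x ih =>
    intro nu t h hpos i hi
    rcases eq_or_ne a [] with rfl | hne
    · have := sup_single (x := x) (by simpa using h)
      simp at hi
      subst hi
      simp [this.1]
    · obtain ⟨la, s, b, c, h1, h2, h3, h4, h5, h6, h7, h8, h9, h10, h11, h12, h13⟩ :=
        sup_elim2 h (fun y hy => hpos y (by simp [hy])) (hpos x (by simp)) hne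
      have ih' := ih h1 (fun y hy => hpos y (by simp [hy])) i
      simp only [List.length_append, List.length_singleton] at hi ⊢
      rw [List.drop_append_of_le_length (by omega)]
      simp only [List.sum_append, List.sum_singleton]
      have e1 := h2 i
      have g1 : nu i - la i ≤ x := h7 ▸ le_sum_one (f := fun r => nu r - la r) hi
      have g2 : i ≠ b → (nu i - la i) + (nu b - la b) ≤ x := fun hib =>
        h7 ▸ le_sum_two (f := fun r => nu r - la r) hi h12 hib
      have g3 : i ≠ c → (nu i - la i) + (nu c - la c) ≤ x := fun hib =>
        h7 ▸ le_sum_two (f := fun r => nu r - la r) hi h13 hib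
      have g4 : i ≠ b → i ≠ c → b ≠ c →
        (nu i - la i) + ((nu b - la b) + (nu c - la c)) ≤ x := fun p q r =>
        h7 ▸ le_sum_three (f := fun r => nu r - la r) hi h12 h13 p q r
      rcases Nat.lt_or_ge i a.length with hi' | hi'
      · obtain ⟨i1, i2⟩ := ih' hi'
        rcases Nat.lt_or_ge s i with hs | hs
        · have i2 := i2 hs
          refine ⟨by omega, fun ht => ?_⟩
          have := g3 (by omega)
          omega
        · have := g2 (by omega)
          refine ⟨by omega, fun ht => ?_⟩
          have := g4 (by omega) (by omega) (by omega)
          omega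
      · have := h4 i hi'
        refine ⟨by omega, fun ht => ?_⟩
        have := g3 (by omega)
        omega



/-! ### Theorem A: the sorted order -/

/-- Partial sums. -/
def S (f : ℕ → ℕ) (k : ℕ) : ℕ := ∑ r ∈ Finset.range k, f r

lemma S_zero (f : ℕ → ℕ) : S f 0 = 0 := by simp [S]

lemma S_succ (f : ℕ → ℕ) (k : ℕ) : S f (k + 1) = S f k + f k := by
  simp [S, Finset.sum_range_succ]

lemma S_mono (f : ℕ → ℕ) {i j : ℕ} (h : i ≤ j) : S f i ≤ S f j := by
  induction j, h using Nat.le_induction with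
  | base => exact le_rfl
  | succ j _ ih => rw [S_succ]; omega

lemma S_congr {f g : ℕ → ℕ} {k : ℕ} (h : ∀ r, r < k → f r = g r) : S f k = S g k := by
  apply Finset.sum_congr rfl
  intro r hr
  exact h r (by simpa using hr)

lemma S_grow {f : ℕ → ℕ} {i j d : ℕ} (hij : i ≤ j) (h : ∀ r, i ≤ r → r < j → d ≤ f r) :
    S f i + d * (j - i) ≤ S f j := by
  induction j, hij using Nat.le_induction with
  | base => simp
  | succ j hj ih =>
    have h1 := ih (fun r h1 h2 => h r h1 (by omega))
    have h2 := h j hj (by omega)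
    rw [S_succ, show j + 1 - i = (j - i) + 1 by omega, Nat.mul_succ]
    omega

lemma S_const {f : ℕ → ℕ} {i j : ℕ} (hij : i ≤ j) (h : ∀ r, i ≤ r → f r = 0) :
    S f j = S f i := by
  induction j, hij using Nat.le_induction with
  | base => rfl
  | succ j hj ih => rw [S_succ, ih, h j hj]; rfl

lemma anti_of_succ {f : ℕ → ℕ} (h : ∀ r, f (r + 1) ≤ f r) {i j : ℕ} (hij : i ≤ j) :
    f j ≤ f i := antitone_nat_of_succ_le h hij

/-- The conditions characterizing the support in the sorted order. -/
structure Good (al nu : ℕ → ℕ) (l : ℕ) : Prop where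
  anti : ∀ r, nu (r + 1) ≤ nu r
  zero : ∀ r, l ≤ r → nu r = 0
  total : S nu l = S al l
  dom : ∀ j, j ≤ l → S al j ≤ S nu j
  cap : ∀ i, i < l → nu i + (l - 1 - i) + S al i ≤ S al l

/-- Result of stripping the last block. -/
def CoreRes (al nu : ℕ → ℕ) (l m : ℕ) (flag : Prop) : Prop :=
  ∃ la : ℕ → ℕ, (∀ r, la r ≤ nu r) ∧ (∀ r, nu (r + 1) ≤ la r) ∧ S la (l + 1) = S al l ∧
    (∀ j, j ≤ l → S al j ≤ S la j) ∧ (∀ i, i < m → la i + (l - 1 - i) + S al i ≤ S al l) ∧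
    la m < nu m ∧ (0 < la m → la m + (l - m) + S al m ≤ S al l) ∧
    (flag → ∃ c, c < m ∧ la c < nu c)

/-- Greedy removal of `y` boxes from the bottom. -/
def grd (nu : ℕ → ℕ) (y r : ℕ) : ℕ := max (nu (r + 1)) (nu r - (y - nu (r + 1)))

lemma grd_sum {nu : ℕ → ℕ} (h : ∀ r, nu (r + 1) ≤ nu r) (y k : ℕ) :
    S (grd nu y) k + min (nu 0) y = S nu k + min (nu k) y := by
  induction k with
  | zero => simp [S_zero]
  | succ k ih =>
    rw [S_succ, S_succ]
    have := h k
    unfold grd at ih ⊢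
    omega

/-- Pure greedy removal satisfies everything but possibly the caps. -/
lemma core_greedy {al nu : ℕ → ℕ} {l m : ℕ} {flag : Prop}
    (hal : ∀ i j, i ≤ j → j ≤ l → al j ≤ al i) (hal2 : ∀ i, i ≤ l → 2 ≤ al i)
    (hg : Good al nu (l + 1)) (hm0 : nu (m + 1) = 0) (hml : m ≤ l) (hmp : 0 < nu m)
    (hcap : ∀ i, i < m → grd nu (al l) i + (l - 1 - i) + S al i ≤ S al l)
    (hflag : flag → ∃ c, c < m ∧ grd nu (al l) c < nu c) : CoreRes al nu l m flag := by
  have h0 : al l ≤ nu 0 := by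
    have h1 := hg.dom 1 (by omega)
    have h2 := hal 0 l (by omega) le_rfl
    simp only [S_succ, S_zero] at h1
    omega
  have hs : ∀ k, S (grd nu (al l)) k + al l = S nu k + min (nu k) (al l) := by
    intro k
    have := grd_sum hg.anti (al l) k
    omega
  have e2 := hal2 l le_rfl
  refine ⟨grd nu (al l), ?_, ?_, ?_, ?_, hcap, ?_, ?_, hflag⟩
  · intro r
    have := hg.anti r
    unfold grd; omega
  · intro r
    unfold grd; omega
  · have h1 := hs (l + 1)
    have h2 := hg.zero (l + 1) le_rfl
    have h3 := hg.total
    rw [S_succ al] at h3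
    omega
  · intro j hj
    have h1 := hs j
    have h2 := hg.dom j (by omega)
    have h3 := hg.dom (j + 1) (by omega)
    rw [S_succ, S_succ] at h3
    have h4 := hal j l hj le_rfl
    omega
  · unfold grd; omega
  · intro _
    have h1 := hg.cap m (by omega)
    rw [S_succ al l] at h1
    unfold grd at *; omega

lemma core {al nu : ℕ → ℕ} {l m : ℕ} {flag : Prop}
    (hal : ∀ i j, i ≤ j → j ≤ l → al j ≤ al i) (hal2 : ∀ i, i ≤ l → 2 ≤ al i)
    (hg : Good al nu (l + 1)) (hm0 : nu (m + 1) = 0) (hml : m ≤ l) (hmp : 0 < nu m)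
    (hm1 : 1 ≤ m)
    (hflag : flag → nu m < nu (m - 1) ∧ nu m + (l + 1 - m) + S al m ≤ S al (l + 1)) :
    CoreRes al nu l m flag := by
  have e2 := hal2 l le_rfl
  have hA := S_succ al l
  have hmz : ∀ r, m + 1 ≤ r → nu r = 0 := by
    intro r hr
    have := anti_of_succ hg.anti hr
    omega
  by_cases hO : ∃ i, i < m ∧ S al l < nu i + (l - 1 - i) + S al i
  · -- some overfull row; take the smallest
    have hO' := Nat.find_spec hO
    have hmin := fun k => Nat.find_min hO (m := k)
    set i := Nat.find hO with hi
    clear_value i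
    obtain ⟨him, hov⟩ := hO'
    have hmin' : ∀ k, k < i → nu k + (l - 1 - k) + S al k ≤ S al l := by
      intro k hk
      have := hmin k hk
      have hkm : k < m := by omega
      simp only [hkm, true_and, not_lt] at this
      exact this
    clear hmin hi
    have hgrow : ∀ j, j ≤ l → S al j + 2 * (l - j) ≤ S al l := fun j hj =>
      S_grow hj (fun r _ h => hal2 r h.le)
    have hgi := hgrow (i + 1) (by omega)
    have hxi := hal i l (by omega) le_rfl
    have hAi := S_succ al i
    have hci := hg.cap i (by omega)
    have hfact : nu (i + 1) + S al i + (l - 1 - i) < S al l := by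
      have h1 := hg.dom i (by omega)
      have h2 := S_succ nu i
      have h3 := S_succ nu (i + 1)
      have h4 := S_mono nu (show i + 1 + 1 ≤ l + 1 by omega)
      have h5 := hg.total
      omega
    obtain ⟨d, hd⟩ : ∃ d, nu i + (l - 1 - i) + S al i = S al l + d := ⟨_, (Nat.add_sub_of_le hov.le).symm⟩
    by_cases hO1 : al l - d ≤ nu (i + 1)
    · -- remove `d` from row `i`, the rest greedily
      obtain ⟨y, hy⟩ : ∃ y, d + y = al l := ⟨al l - d, by omega⟩
      have hyp : 1 ≤ y := by omega
      let la : ℕ → ℕ := fun r => if r < i then nu r else if r = i then nu i - d else grd nu y r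
      have l1 : ∀ r, r < i → la r = nu r := fun r hr => by simp [la, hr]
      have l2 : la i = nu i - d := by simp [la]
      have l3 : ∀ r, i < r → la r = grd nu y r := fun r hr => by
        simp [la, show ¬ r < i by omega, show ¬ r = i by omega]
      clear_value la
      have hle : ∀ r, la r ≤ nu r := by
        intro r
        rcases lt_trichotomy r i with h | h | h
        · rw [l1 r h]
        · subst h; omega
        · rw [l3 r h]
          have := hg.anti r
          unfold grd; omega
      have hst : ∀ r, nu (r + 1) ≤ la r := by
        intro r
        rcases lt_trichotomy r i with h | h | h
        · rw [l1 r h]; exact hg.anti r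
        · subst h; omega
        · rw [l3 r h]
          unfold grd; omega
      have hanti : ∀ r, la (r + 1) ≤ la r := fun r => (hle (r + 1)).trans (hst r)
      have hSi : ∀ k, k ≤ i → S la k = S nu k := fun k hk =>
        S_congr (fun r hr => l1 r (by omega))
      have hS : ∀ k, i + 1 ≤ k → S la k + al l = S nu k + min (nu k) y := by
        intro k hk
        induction k, hk using Nat.le_induction with
        | base =>
          have h1 := hSi i le_rfl
          have h2 := S_succ nu i
          have h3 := S_succ la i
          omega
        | succ k hk ih =>
          have h2 := S_succ nu k
          have h3 := S_succ la k
          have h4 := l3 k (by omega)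
          have := hg.anti k
          unfold grd at h4
          omega
      have htot : S la (l + 1) = S al l := by
        have h1 := hS (l + 1) (by omega)
        have h2 := hg.zero (l + 1) le_rfl
        have h3 := hg.total
        omega
      have hpos : ∀ j, i < j → j ≤ l → 0 < la j → S al l ≤ S la j + (l - j) ∧ la j ≤ l - j := by
        intro j hj hjl hp
        have h1 := S_grow (f := la) (i := i + 1) (j := j) (d := 1) hj (fun r _ hr => by
          have := anti_of_succ hanti (show r ≤ j by omega)
          omega)
        have h2 := S_succ la i
        have h3 := hSi i le_rfl
        have h4 := hg.dom i (by omega)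
        have h5 := S_succ la j
        have h6 := S_mono la (show j + 1 ≤ l + 1 by omega)
        omega
      refine ⟨la, hle, hst, htot, ?_, ?_, ?_, ?_, ?_⟩
      · intro j hj
        rcases Nat.lt_or_ge i j with hij | hij
        · rcases Nat.eq_zero_or_pos (la j) with hz | hz
          · have h1 := S_const (f := la) (show j ≤ l + 1 by omega) (fun r hr => by
              have := anti_of_succ hanti hr
              omega)
            have h2 := S_mono al hj
            omega
          · have h1 := hpos j hij hj hz
            have h2 := hgrow j hj
            omega
        · rw [hSi j hij]; exact hg.dom j (by omega)
      · intro k hk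
        rcases lt_trichotomy k i with h | h | h
        · rw [l1 k h]; exact hmin' k h
        · subst h; omega
        · have h2 := hgrow k (by omega)
          rcases Nat.eq_zero_or_pos (la k) with hz | hz
          · omega
          · have h1 := hpos k h (by omega) hz
            omega
      · rw [l3 m him]; unfold grd; omega
      · intro hz
        have h1 := hpos m him hml hz
        have h2 := hgrow m hml
        omega
      · intro _
        exact ⟨i, him, by omega⟩
    · have hgi : grd nu (al l) i + d ≤ nu i := by
        unfold grd; omega
      apply core_greedy hal hal2 hg hm0 hml hmp
      · intro k hk
        rcases lt_trichotomy k i with h | h | h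
        · have h1 := hmin' k h
          have h2 := hg.anti k
          unfold grd; omega
        · subst h; omega
        · have h1 := hg.cap (k + 1) (by omega)
          have h2 := anti_of_succ hg.anti (show i + 1 ≤ k by omega)
          have h3 := S_succ al k
          have h4 := hal k l (by omega) le_rfl
          unfold grd; omega
      · intro _
        exact ⟨i, him, by omega⟩
  · push Not at hO
    by_cases hsp : flag ∧ al l ≤ nu m
    · obtain ⟨hf, hx⟩ := hsp
      obtain ⟨f1, f2⟩ := hflag hf
      let la : ℕ → ℕ := fun r => if r + 1 = m then nu r - 1 else if r = m then nu m - al l + 1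
        else nu r
      have l1 : ∀ r, r + 1 < m → la r = nu r := fun r hr => by
        simp [la, show ¬ r + 1 = m by omega, show ¬ r = m by omega]
      have l2 : la (m - 1) = nu (m - 1) - 1 := by simp [la]; omega
      have l3 : la m = nu m - al l + 1 := by simp [la]
      have l4 : ∀ r, m < r → la r = nu r := fun r hr => by
        simp [la, show ¬ r + 1 = m by omega, show ¬ r = m by omega]
      clear_value la
      obtain ⟨p, rfl⟩ : ∃ p, m = p + 1 := ⟨m - 1, by omega⟩
      simp only [Nat.add_sub_cancel] at l2 f1
      have s0 : S la p = S nu p := S_congr (fun r hr => l1 r (by omega))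
      have s1 := S_succ la p
      have s1' := S_succ nu p
      have s2 := S_succ la (p + 1)
      have s2' := S_succ nu (p + 1)
      have hz : ∀ k, p + 1 + 1 ≤ k → S la k = S la (p + 1 + 1) ∧ S nu k = S nu (p + 1 + 1) := by
        intro k hk
        refine ⟨S_const hk (fun r hr => ?_), S_const hk hmz⟩
        rw [l4 r (by omega)]; exact hmz r hr
      have ht := hg.total
      have hz1 := hz (l + 1) (by omega)
      refine ⟨la, ?_, ?_, ?_, ?_, ?_, ?_, ?_, ?_⟩
      · intro r
        rcases Nat.lt_or_ge (r + 1) (p + 1) with h | h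
        · rw [l1 r h]
        · rcases Nat.lt_or_ge (p + 1) r with h' | h'
          · rw [l4 r h']
          · obtain rfl | rfl : r = p ∨ r = p + 1 := by omega
            · omega
            · omega
      · intro r
        have := hg.anti r
        rcases Nat.lt_or_ge (r + 1) (p + 1) with h | h
        · rw [l1 r h]; omega
        · rcases Nat.lt_or_ge (p + 1) r with h' | h'
          · rw [l4 r h']; omega
          · obtain rfl | rfl : r = p ∨ r = p + 1 := by omega
            · omega
            · omega
      · omega
      · intro j hj
        rcases Nat.lt_or_ge j (p + 1) with h | h
        · have : S la j = S nu j := S_congr (fun r hr => l1 r (by omega))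
          rw [this]; exact hg.dom j (by omega)
        · rcases Nat.lt_or_ge (p + 1) j with h' | h'
          · have h1 := hz j h'
            have h2 := S_mono al hj
            omega
          · have : j = p + 1 := by omega
            subst this
            omega
      · intro k hk
        have := hO k hk
        rcases Nat.lt_or_ge (k + 1) (p + 1) with h | h
        · rw [l1 k h]; exact this
        · have : k = p := by omega
          subst this; omega
      · omega
      · intro _; omega
      · intro _; exact ⟨p, by omega, by omega⟩
    · apply core_greedy hal hal2 hg hm0 hml hmp
      · intro k hk
        have h1 := hO k hk
        have h2 := hg.anti k
        unfold grd; omega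
      · intro hf
        have hx : nu m < al l := by
          by_contra h
          exact hsp ⟨hf, by omega⟩
        have h1 := grd_sum hg.anti (al l) m
        have h0 : al l ≤ nu 0 := by
          have h1 := hg.dom 1 (by omega)
          have h2 := hal 0 l (by omega) le_rfl
          simp only [S_succ, S_zero] at h1
          omega
        have h2 : S (grd nu (al l)) m < S nu m := by omega
        obtain ⟨c, hc, hc'⟩ := Finset.exists_lt_of_sum_lt h2
        exact ⟨c, by simpa using hc, hc'⟩

theorem thmA {al : ℕ → ℕ} {l : ℕ} (hl : 1 ≤ l) :
    ∀ {nu : ℕ → ℕ} {m : ℕ}, (∀ i j, i ≤ j → j < l → al j ≤ al i) → (∀ i, i < l → 2 ≤ al i) →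
      Good al nu l → 0 < nu m → nu (m + 1) = 0 →
      Sup ((List.range l).map al) nu m ∧
      (1 ≤ m → nu m < nu (m - 1) → nu m + (l - m) + S al m ≤ S al l →
        Sup ((List.range l).map al) nu (m - 1)) := by
  induction l, hl using Nat.le_induction with
  | base =>
    intro nu m hal hal2 hg hmp hm0
    have hm : m = 0 := by
      by_contra h
      have := hg.zero m (by omega)
      omega
    subst hm
    refine ⟨?_, fun h => by omega⟩
    have h1 := hg.total
    simp only [S_succ, S_zero] at h1
    have : nu = fun r => if r = 0 then al 0 else 0 := by
      funext r
      rcases Nat.eq_zero_or_pos r with rfl | h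
      · simp; omega
      · simp [show r ≠ 0 by omega, hg.zero r h]
    rw [this]
    exact sup_base
  | succ l hl ih =>
    intro nu m hal hal2 hg hmp hm0
    have hml : m ≤ l := by
      by_contra h
      have := hg.zero m (by omega)
      omega
    have hm1 : 1 ≤ m := by
      by_contra h
      have h0 : m = 0 := by omega
      subst h0
      have hm0' : nu 1 = 0 := hm0
      have h1 := hg.cap 0 (by omega)
      have h2 := S_const (f := nu) (show 1 ≤ l + 1 by omega) (fun r hr => by
        have := anti_of_succ hg.anti hr
        omega)
      have h3 := hg.total
      have h4 : S nu 1 = nu 0 := by simp [S]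
      omega
    have main : ∀ flag : Prop,
        (flag → nu m < nu (m - 1) ∧ nu m + (l + 1 - m) + S al m ≤ S al (l + 1)) →
        ∀ t, ((m ≤ t) ∨ (flag ∧ m - 1 ≤ t)) → Sup ((List.range (l + 1)).map al) nu t := by
      intro flag hflag t ht
      obtain ⟨la, c1, c2, c3, c4, c5, c6, c7, c8⟩ :=
        core (fun i j h1 h2 => hal i j h1 (by omega)) (fun i h => hal2 i (by omega))
          hg hm0 hml hmp hm1 hflag
      have hanti : ∀ r, la (r + 1) ≤ la r := fun r => (c1 (r + 1)).trans (c2 r)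
      have hlal : la l = 0 := by
        have h1 := c4 l le_rfl
        rw [S_succ] at c3
        omega
      have hlm1 : la (m + 1) = 0 := by
        have := c1 (m + 1)
        omega
      have hlm : nu m ≤ la (m - 1) := by
        have := c2 (m - 1)
        rwa [show m - 1 + 1 = m by omega] at this
      have hgl : Good al la l := by
        refine ⟨hanti, ?_, ?_, c4, ?_⟩
        · intro r hr
          have := anti_of_succ hanti hr
          omega
        · rw [S_succ] at c3; omega
        · intro i hi
          have hgr := S_grow (f := al) (d := 1) hi.le (fun r _ h => by
            have := hal2 r (by omega)
            omega)
          rcases Nat.lt_or_ge i m with h | h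
          · exact c5 i h
          · rcases Nat.eq_zero_or_pos (la i) with hz | hz
            · omega
            · have hlem : i = m := by
                by_contra hne
                have := anti_of_succ hanti (show m + 1 ≤ i by omega)
                omega
              subst hlem
              have := c7 hz
              omega
      have hsup : Sup ((List.range l).map al) la (m - 1) := by
        rcases Nat.eq_zero_or_pos (la m) with hz | hz
        · exact (ih (fun i j h1 h2 => hal i j h1 (by omega)) (fun i h => hal2 i (by omega))
            hgl (by omega) (by rwa [show m - 1 + 1 = m by omega])).1
        · exact (ih (fun i j h1 h2 => hal i j h1 (by omega)) (fun i h => hal2 i (by omega))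
            hgl hz hlm1).2 hm1 (by omega) (c7 hz)
      have hc : ∃ c, c ≤ t ∧ la c < nu c := by
        rcases ht with ht | ⟨hf, ht⟩
        · exact ⟨m, ht, c6⟩
        · obtain ⟨c, hc, hc'⟩ := c8 hf
          exact ⟨c, by omega, hc'⟩
      obtain ⟨c, hc, hc'⟩ := hc
      rw [List.range_succ, List.map_append]
      refine sup_step (x := al l) (N := l + 1) (b := m) hsup ?_ c1 c2 hg.zero ?_ (by omega) c6 hc hc'
      · intro y hy
        simp only [List.mem_map, List.mem_range] at hy
        obtain ⟨i, hi, rfl⟩ := hy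
        have := hal2 i (by omega)
        omega
      · change S nu (l + 1) = S la (l + 1) + al l
        rw [c3, hg.total, S_succ]
    refine ⟨main False (fun h => h.elim) m (Or.inl le_rfl), fun _ h1 h2 => ?_⟩
    exact main True (fun _ => ⟨h1, h2⟩) (m - 1) (Or.inr ⟨trivial, le_rfl⟩)



/-! ### Bridging lists and functions -/

/-- A list as a function, extended by zero. -/
def F (a : List ℕ) : ℕ → ℕ := fun j => a.getD j 0

lemma F_zero (a : List ℕ) {r : ℕ} (h : a.length ≤ r) : F a r = 0 := by
  simp [F, List.getD_eq_getElem?_getD, List.getElem?_eq_none h]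

lemma F_mem (a : List ℕ) {r : ℕ} (h : r < a.length) : F a r ∈ a := by
  unfold F
  rw [List.getD_eq_getElem _ _ h]; simp

lemma S_F_take (a : List ℕ) (k : ℕ) : S (F a) k = (a.take k).sum := by
  induction k with
  | zero => simp [S_zero]
  | succ k ih =>
    rw [S_succ, ih]
    rcases Nat.lt_or_ge k a.length with h | h
    · rw [List.sum_take_succ _ _ h]
      unfold F
      rw [List.getD_eq_getElem _ _ h]
    · rw [F_zero a h, List.take_of_length_le h, List.take_of_length_le (by omega)]
      rfl

lemma S_F_len (a : List ℕ) {k : ℕ} (h : a.length ≤ k) : S (F a) k = a.sum := by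
  rw [S_F_take, List.take_of_length_le h]

lemma range_map_F (a : List ℕ) : (List.range a.length).map (F a) = a := by
  apply List.ext_getElem
  · simp
  · intro i h1 h2
    simp [F, List.getD_eq_getElem?_getD, List.getElem?_eq_getElem h2]

lemma F_anti {a : List ℕ} (h : a.Pairwise (· ≥ ·)) (r : ℕ) : F a (r + 1) ≤ F a r := by
  rcases Nat.lt_or_ge (r + 1) a.length with h1 | h1
  · exact pairwise_getD h (by omega) h1
  · rw [F_zero a h1]; omega

lemma exists_list {f : ℕ → ℕ} (hf : ∀ r, f (r + 1) ≤ f r) {N : ℕ} (hN : f N = 0) :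
    ∃ nu, IsPartition nu ∧ F nu = f := by
  have hex : ∃ k, f k = 0 := ⟨N, hN⟩
  have h1 := Nat.find_spec hex
  have h2 := fun m => Nat.find_min hex (m := m)
  set k := Nat.find hex
  clear_value k
  refine ⟨(List.range k).map f, ⟨?_, ?_⟩, ?_⟩
  · rw [List.pairwise_map]
    exact List.Pairwise.imp (fun {i j} h => anti_of_succ hf (le_of_lt h)) List.pairwise_lt_range
  · intro x hx
    simp only [List.mem_map, List.mem_range] at hx
    obtain ⟨i, hi, rfl⟩ := hx
    exact Nat.pos_of_ne_zero (h2 i hi)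
  · funext j
    unfold F
    rcases Nat.lt_or_ge j k with h | h
    · rw [List.getD_eq_getElem _ _ (by simpa using h)]; simp
    · rw [List.getD_eq_default _ _ (by simpa using h)]
      have := anti_of_succ hf h
      omega

/-- Membership of a function in the Schur interval. -/
def Int' (a : List ℕ) (f : ℕ → ℕ) : Prop :=
  (∀ r, a.length ≤ r → f r = 0) ∧ S f a.length = a.sum ∧
    (∀ j, j ≤ a.length → S (F a) j ≤ S f j) ∧ f 0 + (a.length - 1) ≤ a.sum

lemma length_le_sum {a : List ℕ} (h : ∀ x ∈ a, 0 < x) : a.length ≤ a.sum := by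
  induction a with
  | nil => simp
  | cons x a ih =>
    have h1 := h x (by simp)
    have h2 := ih (fun y hy => h y (by simp [hy]))
    simp; omega

lemma interval_iff {a nu : List ℕ} (ha : ∀ x ∈ a, 0 < x) (hl : 1 ≤ a.length) :
    (DomLE a nu ∧ DomLE nu [a.sum - (a.length - 1), a.length - 1]) ↔ Int' a (F nu) := by
  have hls := length_le_sum ha
  constructor
  · rintro ⟨⟨h1, h2⟩, _, h3⟩
    have hs : S (F nu) a.length = a.sum := by
      have e1 := h2 a.length
      rw [← S_F_take, ← S_F_take, S_F_len a le_rfl] at e1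
      have e2 := S_mono (F nu) (show a.length ≤ a.length + nu.length by omega)
      rw [S_F_len nu (show nu.length ≤ a.length + nu.length by omega)] at e2
      omega
    refine ⟨?_, hs, ?_, ?_⟩
    · intro r hr
      have e1 := S_mono (F nu) (show r + 1 ≤ (r + 1) + nu.length by omega)
      rw [S_F_len nu (show nu.length ≤ r + 1 + nu.length by omega), S_succ] at e1
      have e2 := S_mono (F nu) hr
      omega
    · intro j _
      rw [S_F_take, S_F_take]; exact h2 j
    · have := h3 1
      rw [← S_F_take, S_succ, S_zero] at this
      simp at this
      omega
  · rintro ⟨h1, h2, h3, h4⟩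
    have hs : nu.sum = a.sum := by
      rw [← S_F_len nu (show nu.length ≤ a.length + nu.length by omega),
        S_const (show a.length ≤ a.length + nu.length by omega) h1, h2]
    have hle : ∀ i, S (F nu) i ≤ nu.sum := by
      intro i
      rw [← S_F_len nu (show nu.length ≤ i + nu.length by omega)]
      exact S_mono _ (by omega)
    refine ⟨⟨hs.symm, ?_⟩, ?_, ?_⟩
    · intro i
      rw [← S_F_take, ← S_F_take]
      rcases Nat.lt_or_ge i a.length with h | h
      · exact h3 i h.le
      · rw [S_F_len a h, ← h2]; exact S_mono _ h
    · simp; omega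
    · intro i
      rw [← S_F_take]
      have := hle i
      rcases i with _ | _ | i
      · simp [S_zero]
      · rw [S_succ, S_zero]
        simp; omega
      · simp; omega

lemma sup_int {a b : List ℕ} (hba : b.Perm a) (ha : ∀ x ∈ a, 0 < x) (hl : 1 ≤ a.length)
    {f : ℕ → ℕ} {t : ℕ} (h : Sup b f t) : Int' a f := by
  have hb : ∀ x ∈ b, 0 < x := fun x hx => ha x (hba.mem_iff.mp hx)
  have h1 := sup_supp h hb
  rw [hba.length_eq, hba.sum_eq] at h1
  refine ⟨h1.1, h1.2, ?_, ?_⟩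
  · intro j hj
    rw [S_F_take]
    obtain ⟨l, hl1, hl2⟩ : (a.take j).Subperm b :=
      ((List.take_sublist j a).subperm).trans hba.symm.subperm
    have := sup_dom h hb l hl2
    rw [hl1.sum_eq, hl1.length_eq] at this
    simpa [S, hj] using this
  · have := (sup_cap h hb 0 (by rw [hba.length_eq]; omega)).1
    rw [hba.length_eq] at this
    simp only [List.drop_zero, hba.sum_eq] at this
    omega

lemma fullSupport_iff {a : List ℕ} (ha : ∀ x ∈ a, 0 < x) (hl : 1 ≤ a.length) :
    FullSupportConn a ↔ ∀ f : ℕ → ℕ, (∀ r, f (r + 1) ≤ f r) → Int' a f → ∃ t, Sup a f t := by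
  constructor
  · intro h f hf hi
    obtain ⟨nu, hnu, rfl⟩ := exists_list hf (hi.1 a.length le_rfl)
    have hm : nu ∈ SupportSetConn a := by
      rw [h]
      exact ⟨hnu, (interval_iff ha hl).mpr hi⟩
    exact (inSupportConn_iff a nu).mp hm.2
  · intro h
    apply Set.ext
    intro nu
    constructor
    · rintro ⟨h1, h2⟩
      obtain ⟨t, ht⟩ := (inSupportConn_iff a nu).mp h2
      exact ⟨h1, (interval_iff ha hl).mpr (sup_int (List.Perm.refl a) ha hl ht)⟩
    · rintro ⟨h1, h2⟩
      refine ⟨h1, (inSupportConn_iff a nu).mpr ?_⟩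
      exact h (F nu) (F_anti h1.1) ((interval_iff ha hl).mp h2)

lemma equiv_elim {a : List ℕ} (ha : ∀ x ∈ a, 0 < x) (hl : 1 ≤ a.length)
    (h : FullEquivClass a) {b : List ℕ} (hb : b.Perm a) {f : ℕ → ℕ} (hf : ∀ r, f (r + 1) ≤ f r)
    {t : ℕ} (hs : Sup b f t) : ∃ t, Sup a f t := by
  have hi := sup_int hb ha hl hs
  obtain ⟨nu, hnu, rfl⟩ := exists_list hf (hi.1 a.length le_rfl)
  have hm : nu ∈ SupportSetConn a := by
    rw [← h b hb]
    exact ⟨hnu, (inSupportConn_iff b nu).mpr ⟨t, hs⟩⟩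
  exact (inSupportConn_iff a nu).mp hm.2

lemma equiv_intro {a : List ℕ} (ha : ∀ x ∈ a, 0 < x) (hl : 1 ≤ a.length)
    (h : ∀ b : List ℕ, b.Perm a → ∀ f : ℕ → ℕ, (∀ r, f (r + 1) ≤ f r) → Int' a f →
      ∃ t, Sup b f t) : FullEquivClass a := by
  have key : ∀ b : List ℕ, b.Perm a →
      SupportSetConn b = {nu | IsPartition nu ∧ Int' a (F nu)} := by
    intro b hb
    apply Set.ext
    intro nu
    constructor
    · rintro ⟨h1, h2⟩
      obtain ⟨t, ht⟩ := (inSupportConn_iff b nu).mp h2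
      exact ⟨h1, sup_int hb ha hl ht⟩
    · rintro ⟨h1, h2⟩
      exact ⟨h1, (inSupportConn_iff b nu).mpr (h b hb (F nu) (F_anti h1.1) h2)⟩
  intro b hb
  rw [key b hb, key a (List.Perm.refl a)]



/-! ### Part 1: a full equivalence class forces full support -/

lemma S_point (f : ℕ → ℕ) (p v k : ℕ) :
    S (fun r => f r + if r = p then v else 0) k = S f k + if p < k then v else 0 := by
  induction k with
  | zero => simp [S_zero]
  | succ k ih =>
    rw [S_succ, S_succ, ih]
    rcases lt_trichotomy k p with h | h | h
    · simp [show ¬ k = p by omega, show ¬ p < k by omega, show ¬ p < k + 1 by omega]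
    · simp [h]; omega
    · simp [show ¬ k = p by omega, h, show p < k + 1 by omega]; omega

lemma sum_map_range (f : ℕ → ℕ) (k : ℕ) : ((List.range k).map f).sum = S f k := by
  induction k with
  | zero => simp [S_zero]
  | succ k ih => rw [List.range_succ, S_succ]; simp [ih]

lemma sup_stair {g : ℕ → ℕ} (k : ℕ) :
    (∀ r, r < k → g (r + 1) ≤ g r) → (∀ r, r ≤ k → 0 < g r) →
    Sup ((List.range (k + 1)).map g) (fun r => if r < k + 1 then g r else 0) k := by
  induction k with
  | zero =>
    intro _ _
    have : (fun r => if r < 0 + 1 then g r else 0) = fun r => if r = 0 then g 0 else 0 := by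
      funext r
      rcases Nat.eq_zero_or_pos r with h | h
      · simp [h]
      · simp [show ¬ r = 0 by omega]
    rw [this]
    exact sup_base
  | succ k ih =>
    intro h1 h2
    have h3 := ih (fun r hr => h1 r (by omega)) (fun r hr => h2 r (by omega))
    rw [List.range_succ, List.map_append]
    refine sup_step (N := k + 1 + 1) (b := k + 1) (c := k + 1) h3 ?_ ?_ ?_ ?_ ?_ (by omega) ?_
      le_rfl ?_
    · intro y hy
      simp only [List.mem_map, List.mem_range] at hy
      obtain ⟨i, hi, rfl⟩ := hy
      exact h2 i (by omega)
    · intro r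
      split_ifs <;> omega
    · intro r
      have := h1 r
      split_ifs <;> omega
    · intro r hr
      simp [show ¬ r < k + 1 + 1 by omega]
    · change S _ _ = S _ _ + _
      rw [S_succ, S_succ _ (k + 1)]
      have e : S (fun r => if r < k + 1 + 1 then g r else 0) (k + 1) =
          S (fun r => if r < k + 1 then g r else 0) (k + 1) := by
        apply S_congr
        intro r hr
        simp [hr, show r < k + 1 + 1 by omega]
      rw [e]
      simp
    · have := h2 (k + 1) le_rfl
      simp [this]
    · have := h2 (k + 1) le_rfl
      simp [this]

lemma sup_ext {p R : ℕ} {mu : ℕ → ℕ} (hmu : ∀ r, mu (r + 1) ≤ mu r) (hR : R ≤ mu p) :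
    ∀ (l : List ℕ) (a : List ℕ) (la : ℕ → ℕ), Sup a la p → (∀ y ∈ a, 0 < y) →
      (∀ y ∈ l, 2 ≤ y) → (∀ r, la (r + 1) ≤ la r) → (∀ r, p + 1 < r → la r = 0) →
      (∀ r, r ≤ p → la r ≤ mu r) → S mu (p + 1) + 1 = S la (p + 1) + l.length →
      la (p + 1) + l.sum + 1 = R + l.length →
      ∃ t, Sup (a ++ l) (fun r => if r < p + 1 then mu r else if r = p + 1 then R else 0) t := by
  intro l
  induction l with
  | nil =>
    intro a la _ _ _ _ _ hle hS _
    exfalso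
    have : S la (p + 1) ≤ S mu (p + 1) :=
      Finset.sum_le_sum (fun r hr => hle r (by simp at hr; omega))
    simp at hS
    omega
  | cons y l ih =>
    intro a la hsup hpos hl hanti hz hle hS hRs
    have hy := hl y (by simp)
    rcases eq_or_ne l [] with rfl | hne
    · -- last block
      simp only [List.length_cons, List.length_nil, List.sum_cons, List.sum_nil] at hS hRs
      have heq : ∀ r, r ≤ p → la r = mu r := by
        intro r hr
        by_contra hcon
        have hlt : S la (p + 1) < S mu (p + 1) := by
          apply Finset.sum_lt_sum
          · intro r hr; exact hle r (by simp at hr; omega)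
          · exact ⟨r, by simp; omega, lt_of_le_of_ne (hle r hr) hcon⟩
        omega
      refine ⟨p + 1, sup_step (N := p + 1 + 1) (b := p + 1) (c := p + 1) hsup hpos ?_ ?_ ?_ ?_
        (by omega) ?_ le_rfl ?_⟩
      · intro r
        have e1 := hle r
        have e2 := hz r
        split_ifs with c1 c2
        · omega
        · subst c2; omega
        · omega
      · intro r
        split_ifs with c1 c2
        · rw [heq r (by omega)]; exact hmu r
        · have : r = p := by omega
          subst this
          rw [heq r le_rfl]; exact hR
        · omega
      · intro r hr
        simp [show ¬ r < p + 1 by omega, show ¬ r = p + 1 by omega]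
      · change S _ _ = S _ _ + _
        rw [S_succ, S_succ _ (p + 1)]
        have e : S (fun r => if r < p + 1 then mu r else if r = p + 1 then R else 0) (p + 1) =
            S la (p + 1) := by
          apply S_congr
          intro r hr
          simp [hr, heq r (by omega)]
        rw [e]
        simp
        omega
      · simp; omega
      · simp; omega
    · have hl0 : 0 < l.length := List.length_pos_iff.mpr hne
      simp only [List.length_cons, List.sum_cons] at hS hRs
      have hlsum : 2 * l.length ≤ l.sum := by
        have : ∀ l : List ℕ, (∀ y ∈ l, 2 ≤ y) → 2 * l.length ≤ l.sum := by
          intro l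
          induction l with
          | nil => simp
          | cons z l ih =>
            intro h
            have e1 := h z (by simp)
            have e2 := ih (fun y hy => h y (by simp [hy]))
            simp; omega
        exact this l (fun y hy => hl y (by simp [hy]))
      have hex : ∃ j, j ≤ p ∧ la j < mu j := by
        have : S la (p + 1) < S mu (p + 1) := by omega
        obtain ⟨j, hj, hj'⟩ := Finset.exists_lt_of_sum_lt this
        exact ⟨j, by simp at hj; omega, hj'⟩
      have hj := Nat.find_spec hex
      have hmin := fun k => Nat.find_min hex (m := k)
      set j := Nat.find hex
      clear_value j
      obtain ⟨hjp, hjlt⟩ := hj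
      have hbefore : ∀ r, r < j → la r = mu r := by
        intro r hr
        have h1 := hmin r hr
        have h2 := hle r (by omega)
        have h3 : r ≤ p := by omega
        simp only [h3, true_and, not_lt] at h1
        omega
      have hlap : la (p + 1) + (y - 1) ≤ la p := by
        have e1 : S la p ≤ S mu p :=
          Finset.sum_le_sum (fun r hr => hle r (by simp at hr; omega))
        rw [S_succ, S_succ] at hS
        omega
      let la' : ℕ → ℕ := fun r => (la r + if r = p + 1 then y - 1 else 0) + if r = j then 1 else 0
      have hS' : ∀ k, S la' k = S la k + (if p + 1 < k then y - 1 else 0) + if j < k then 1 else 0 := by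
        intro k
        have e1 := S_point (fun r => la r + if r = p + 1 then y - 1 else 0) j 1 k
        have e2 := S_point la (p + 1) (y - 1) k
        rw [e2] at e1
        exact e1
      have l1 : la' (p + 1) = la (p + 1) + (y - 1) := by
        simp [la', show ¬ p + 1 = j by omega]
      have l2 : la' j = la j + 1 := by
        simp [la', show ¬ j = p + 1 by omega]
      have l3 : ∀ r, r ≠ j → r ≠ p + 1 → la' r = la r := by
        intro r e1 e2
        simp [la', e1, e2]
      clear_value la'
      have hle' : ∀ r, la r ≤ la' r := by
        intro r
        by_cases e1 : r = j
        · subst e1; omega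
        · by_cases e2 : r = p + 1
          · subst e2; omega
          · rw [l3 r e1 e2]
      have hst' : ∀ r, la' (r + 1) ≤ la r := by
        intro r
        by_cases e1 : r + 1 = j
        · have := hbefore r (by omega)
          have h5 := hmu r
          rw [e1] at h5
          rw [e1]; omega
        · by_cases e2 : r + 1 = p + 1
          · have : r = p := by omega
            subst this; omega
          · rw [l3 _ e1 e2]; exact hanti r
      have hz' : ∀ r, p + 1 < r → la' r = 0 := by
        intro r hr
        rw [l3 r (by omega) (by omega)]; exact hz r hr
      have hstep : Sup (a ++ [y]) la' p := by
        refine sup_step (N := p + 1 + 1) (b := p + 1) (c := j) hsup hpos hle' hst'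
          (fun r hr => hz' r (by omega)) ?_ (by omega) (by omega) hjp (by omega)
        change S _ _ = S _ _ + _
        rw [hS']
        simp [show j < p + 1 + 1 by omega]
        omega
      have := ih (a ++ [y]) la' hstep ?_ (fun y hy => hl y (by simp [hy]))
        (fun r => (hst' r).trans (hle' r)) hz' ?_ ?_ ?_
      · simpa using this
      · intro z hz
        simp at hz
        rcases hz with hz | hz
        · exact hpos z hz
        · omega
      · intro r hr
        by_cases e1 : r = j
        · subst e1; omega
        · rw [l3 r e1 (by omega)]; exact hle r hr
      · rw [hS']
        simp [show j < p + 1 by omega]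
        omega
      · omega

lemma part1 {a : List ℕ} (ha : IsPartition a) (h2 : PartsGE a 2) (h3 : 3 ≤ a.length)
    (h : FullEquivClass a) : FullSupportConn a := by
  have hpos : ∀ x ∈ a, 0 < x := ha.2
  rw [fullSupport_iff hpos (by omega)]
  intro f hf hi
  have hsum : S (F a) a.length = a.sum := S_F_len a le_rfl
  obtain ⟨i1, i2, i3, i4⟩ := hi
  have hanti : ∀ r, F a (r + 1) ≤ F a r := F_anti ha.1
  have ha2 : ∀ r, r < a.length → 2 ≤ F a r := fun r hr => h2 _ (F_mem a hr)
  by_cases hcap : ∀ i, i < a.length → f i + (a.length - 1 - i) + S (F a) i ≤ S (F a) a.length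
  · have hg : Good (F a) f a.length := ⟨hf, i1, by rw [i2, hsum], i3, hcap⟩
    have hex : ∃ k, f k = 0 := ⟨a.length, i1 _ le_rfl⟩
    have hk := Nat.find_spec hex
    have hmin := fun k => Nat.find_min hex (m := k)
    set k := Nat.find hex
    clear_value k
    have hk0 : k ≠ 0 := by
      rintro rfl
      have e1 := i3 1 (by omega)
      have e2 := ha2 0 (by omega)
      simp only [S_succ, S_zero] at e1
      omega
    have := (thmA (l := a.length) (by omega) (nu := f) (m := k - 1)
      (fun i j hij _ => anti_of_succ hanti hij) ha2 hg
      (Nat.pos_of_ne_zero (hmin (k - 1) (by omega)))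
      (by rwa [show k - 1 + 1 = k by omega])).1
    rw [range_map_F] at this
    exact ⟨_, this⟩
  · push Not at hcap
    obtain ⟨i, hil, hov⟩ := hcap
    have hi0 : i ≠ 0 := by
      rintro rfl
      rw [S_zero] at hov
      omega
    obtain ⟨p, rfl⟩ : ∃ p, i = p + 1 := ⟨i - 1, by omega⟩
    have hi1 : p + 2 < a.length := by
      by_contra hc
      have e : a.length = p + 1 + 1 := by omega
      have e1 := i3 (p + 1) (by omega)
      rw [e] at i2 hov hsum
      rw [S_succ] at i2
      omega
    obtain ⟨q, hq⟩ : ∃ q, a.length = p + 2 + q := ⟨a.length - (p + 2), by omega⟩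
    obtain ⟨n, hn⟩ : ∃ n, n = a.length := ⟨_, rfl⟩
    have hgrow := S_grow (f := F a) (i := p + 2) (j := a.length) (d := 2) (by omega)
      (fun r _ hr => ha2 r hr)
    have hsp1 := S_succ (F a) (p + 1)
    have hsp0 := S_succ (F a) p
    simp only [show p + 1 + 1 = p + 2 by omega] at hsp1
    obtain ⟨R, hR⟩ : ∃ R, R + q + S (F a) (p + 1) = S (F a) a.length + 1 := by
      refine ⟨S (F a) a.length + 1 - q - S (F a) (p + 1), ?_⟩
      omega
    have hRf : R ≤ f (p + 1) := by omega
    -- the row lengths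
    let M : ℕ → ℕ := fun j => max (F a j) R
    have hM : ∀ j, M j = max (F a j) R := fun _ => rfl
    clear_value M
    have hMf : ∀ k, k ≤ p + 1 → S M k ≤ S f k := by
      intro k hk
      induction k with
      | zero => simp [S_zero]
      | succ k ih =>
        by_cases hc : R ≤ F a k
        · have e : S M (k + 1) = S (F a) (k + 1) := by
            apply S_congr
            intro r hr
            have := anti_of_succ hanti (show r ≤ k by omega)
            rw [hM]; omega
          rw [e]; exact i3 _ (by omega)
        · rw [S_succ, S_succ, hM k]
          have e1 := ih (by omega)
          have e2 := anti_of_succ hf (show k ≤ p + 1 by omega)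
          omega
    have hfi : S f (p + 1) + f (p + 1) ≤ a.sum := by
      rw [← i2, ← S_succ]; exact S_mono f (by omega)
    obtain ⟨E, hE⟩ : ∃ E, S M (p + 1) + E + R = S (F a) a.length := by
      refine ⟨S (F a) a.length - S M (p + 1) - R, ?_⟩
      have := hMf (p + 1) le_rfl
      omega
    have hgap : F a (p + 1) + 2 ≤ F a p := by
      have e1 : S (F a) p ≤ S M p := Finset.sum_le_sum (fun r _ => by rw [hM]; omega)
      have e2 := S_succ M p
      have e3 := hM p
      omega
    let mu : ℕ → ℕ := fun r => M r + if r = 0 then E else 0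
    have hmuS : S mu (p + 1) = S M (p + 1) + E := by
      have := S_point M 0 E (p + 1)
      simpa using this
    have hmuM : ∀ r, M r ≤ mu r := fun r => by simp [mu]
    have hmua : ∀ r, mu (r + 1) ≤ mu r := by
      intro r
      have e1 := hM r
      have e2 := hM (r + 1)
      have e3 := hanti r
      have e4 : mu (r + 1) = M (r + 1) := by simp [mu]
      have e5 := hmuM r
      omega
    clear_value mu
    -- the rearrangement
    let g : ℕ → ℕ := fun r => if r = p then F a (p + 1) else F a r
    have hgp : g p = F a (p + 1) := by simp [g]
    have hgr : ∀ r, r ≠ p → g r = F a r := fun r hr => by simp [g, hr]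
    clear_value g
    have st1 := sup_stair (g := g) p (by
      intro r hr
      rw [hgr r (by omega)]
      by_cases e : r + 1 = p
      · rw [e, hgp]; exact anti_of_succ hanti (by omega)
      · rw [hgr _ e]; exact hanti r) (by
      intro r hr
      by_cases e : r = p
      · rw [e, hgp]
        have := ha2 (p + 1) (by omega)
        omega
      · rw [hgr r e]
        have := ha2 r (by omega)
        omega)
    have hposg : ∀ y ∈ (List.range (p + 1)).map g, 0 < y := by
      intro y hy
      simp only [List.mem_map, List.mem_range] at hy
      obtain ⟨r, hr, rfl⟩ := hy
      by_cases e : r = p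
      · rw [e, hgp]
        have := ha2 (p + 1) (by omega)
        omega
      · rw [hgr r e]
        have := ha2 r (by omega)
        omega
    have b2 := ha2 (p + 1) (by omega)
    have st2 : Sup ((List.range (p + 1)).map g ++ [F a p])
        (fun r => if r < p + 2 then F a r else 0) p := by
      refine sup_step (N := p + 1 + 1) (b := p + 1) (c := p) st1 hposg ?_ ?_ ?_ ?_ (by omega) ?_
        le_rfl ?_
      · intro r
        by_cases e : r = p
        · subst e
          simp [hgp]; omega
        · rw [hgr r e]
          split_ifs <;> omega
      · intro r
        by_cases e : r = p
        · subst e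
          simp [hgp]
        · rw [hgr r e]
          have := hanti r
          split_ifs <;> omega
      · intro r hr
        simp [show ¬ r < p + 2 by omega]
      · change S _ _ = S _ _ + _
        rw [S_succ, S_succ _ p, S_succ _ (p + 1), S_succ _ p]
        have e : S (fun r => if r < p + 2 then F a r else 0) p =
            S (fun r => if r < p + 1 then g r else 0) p := by
          apply S_congr
          intro r hr
          simp [show r < p + 1 by omega, show r < p + 2 by omega, hgr r (by omega)]
        rw [e]
        simp [hgp]
        omega
      · simp; omega
      · simp [hgp]; omega
    let l : List ℕ := (List.range q).map (fun x => F a (p + 2 + x))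
    have haeq : a = (List.range p).map (F a) ++ [F a p] ++ [F a (p + 1)] ++ l := by
      conv_lhs => rw [← range_map_F a, hq, List.range_add]
      simp [l, List.range_succ]
    have hlsum : S (F a) (p + 2) + l.sum = a.sum := by
      conv_rhs => rw [haeq]
      simp only [List.sum_append, List.sum_singleton, sum_map_range]
      omega
    have hllen : l.length = q := by simp [l]
    have hl2 : ∀ y ∈ l, 2 ≤ y := by
      intro y hy
      simp only [l, List.mem_map, List.mem_range] at hy
      obtain ⟨x, hx, rfl⟩ := hy
      exact ha2 _ (by omega)
    clear_value l
    have hS1 : S (fun r => if r < p + 2 then F a r else 0) (p + 1) = S (F a) (p + 1) := by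
      apply S_congr
      intro r hr
      simp [show r < p + 2 by omega]
    have hmup : R ≤ mu p := by
      have e1 := hM p
      have e2 := hmuM p
      omega
    obtain ⟨t, ht⟩ := sup_ext hmua hmup l _ _ st2 (by
        intro y hy
        rcases List.mem_append.mp hy with hy | hy
        · exact hposg y hy
        · simp at hy
          rw [hy]; omega) hl2 (by
        intro r
        have := hanti r
        split_ifs <;> omega) (by
        intro r hr
        simp [show ¬ r < p + 2 by omega]) (by
        intro r hr
        simp only [show r < p + 2 by omega, if_true]
        have e1 := hM r
        have e2 := hmuM r
        omega) (by rw [hS1, hmuS, hllen]; omega) (by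
        simp only [show p + 1 < p + 2 by omega, if_true, hllen]
        omega)
    have hperm : ((List.range (p + 1)).map g ++ [F a p] ++ l).Perm a := by
      conv_rhs => rw [haeq]
      apply List.Perm.append_right
      rw [List.range_succ, List.map_append, List.append_assoc, List.append_assoc]
      have e : (List.range p).map g = (List.range p).map (F a) := by
        apply List.map_congr_left
        intro r hr
        exact hgr r (by simp at hr; omega)
      rw [e]
      apply List.Perm.append_left
      simp only [List.map_cons, List.map_nil, hgp, List.cons_append, List.nil_append]
      exact List.Perm.swap _ _ _
    obtain ⟨t', ht'⟩ := equiv_elim hpos (by omega) h hperm (by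
      intro r
      have e1 := hmua r
      by_cases e : r = p
      · subst e
        simp [hmup]
      · split_ifs <;> omega) ht
    have := (sup_cap ht' hpos (p + 1) (by omega)).1
    have e := List.sum_take_add_sum_drop a (p + 1)
    rw [← S_F_take] at e
    simp at this
    omega



/-! ### Part 2: at most four rows -/

/-- A shape with at most four rows. -/
def sh (x y z w : ℕ) : ℕ → ℕ
  | 0 => x
  | 1 => y
  | 2 => z
  | 3 => w
  | _ => 0

lemma sup_step4 {a : List ℕ} {l0 l1 l2 l3 n0 n1 n2 n3 s t x : ℕ}
    (h : Sup a (sh l0 l1 l2 l3) s) (hpos : ∀ y ∈ a, 0 < y)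
    (h0 : l0 ≤ n0) (h1 : l1 ≤ n1) (h2 : l2 ≤ n2) (h3 : l3 ≤ n3)
    (k1 : n1 ≤ l0) (k2 : n2 ≤ l1) (k3 : n3 ≤ l2)
    (hs : n0 + n1 + n2 + n3 = l0 + l1 + l2 + l3 + x)
    (hb : (s < 1 ∧ l1 < n1) ∨ (s < 2 ∧ l2 < n2) ∨ (s < 3 ∧ l3 < n3))
    (hc : l0 < n0 ∨ (1 ≤ t ∧ l1 < n1) ∨ (2 ≤ t ∧ l2 < n2) ∨ (3 ≤ t ∧ l3 < n3)) :
    Sup (a ++ [x]) (sh n0 n1 n2 n3) t := by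
  obtain ⟨b, hb1, hb2⟩ : ∃ b, s < b ∧ sh l0 l1 l2 l3 b < sh n0 n1 n2 n3 b := by
    rcases hb with hb | hb | hb
    · exact ⟨1, hb.1, hb.2⟩
    · exact ⟨2, hb.1, hb.2⟩
    · exact ⟨3, hb.1, hb.2⟩
  obtain ⟨c, hc1, hc2⟩ : ∃ c, c ≤ t ∧ sh l0 l1 l2 l3 c < sh n0 n1 n2 n3 c := by
    rcases hc with hc | hc | hc | hc
    · exact ⟨0, by omega, hc⟩
    · exact ⟨1, hc.1, hc.2⟩
    · exact ⟨2, hc.1, hc.2⟩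
    · exact ⟨3, hc.1, hc.2⟩
  refine sup_step (N := 4) h hpos ?_ ?_ ?_ ?_ hb1 hb2 hc1 hc2
  · intro r
    rcases r with _ | _ | _ | _ | r <;> simp [sh] <;> omega
  · intro r
    rcases r with _ | _ | _ | _ | r <;> simp [sh] <;> omega
  · intro r hr
    rcases r with _ | _ | _ | _ | r
    · omega
    · omega
    · omega
    · omega
    · rfl
  · simp [Finset.sum_range_succ, sh]; omega

lemma two {p q u m : ℕ} (h1 : 1 ≤ m) (h2 : m ≤ p) (h3 : m ≤ q) (h4 : u + m = p + q) :
    Sup [p, q] (sh u m 0 0) 1 ∧ (m < q → Sup [p, q] (sh u m 0 0) 0) := by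
  have hb : Sup [p] (sh p 0 0 0) 0 := by
    have : sh p 0 0 0 = fun r => if r = 0 then p else 0 := by
      funext r
      rcases r with _ | _ | _ | _ | r <;> simp [sh]
    rw [this]; exact sup_base
  have hp : ∀ y ∈ [p], 0 < y := by simp; omega
  constructor
  · have := sup_step4 (t := 1) (x := q) (n0 := u) (n1 := m) (n2 := 0) (n3 := 0) hb hp (by omega)
      (by omega) (by omega) (by omega) (by omega) (by omega) (by omega) (by omega) (by omega)
      (by omega)
    simpa using this
  · intro _
    have := sup_step4 (t := 0) (x := q) (n0 := u) (n1 := m) (n2 := 0) (n3 := 0) hb hp (by omega)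
      (by omega) (by omega) (by omega) (by omega) (by omega) (by omega) (by omega) (by omega)
      (by omega)
    simpa using this

lemma three {p q s x y z : ℕ} (hp : 2 ≤ p) (hq : 2 ≤ q) (hsum : x + y + z = p + q + s)
    (hxy : y ≤ x) (hyz : z ≤ y) (hz : 0 < z) (hy : y < p + q) (hxp : p ≤ x) (hxq : q ≤ x)
    (hxs : s ≤ x) (hzp : z ≤ p) (hzq : z ≤ q) (hzs : z ≤ s) :
    Sup [p, q, s] (sh x y z 0) 2 ∧ (z < s → Sup [p, q, s] (sh x y z 0) 1) := by
  obtain ⟨m, m1, m2, m3, m4, m5, m6, m7⟩ : ∃ m, 1 ≤ m ∧ z ≤ m ∧ p + q ≤ x + m ∧ m ≤ p ∧ m ≤ q ∧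
      m ≤ y ∧ m + y ≤ p + q := by
    refine ⟨max 1 (max z (p + q - x)), ?_⟩
    omega
  have h := (two (q := q) (u := p + q - m) m1 m4 m5 (by omega)).1
  have hpos : ∀ y ∈ [p, q], 0 < y := by simp; omega
  constructor
  · have := sup_step4 (t := 2) (x := s) (n0 := x) (n1 := y) (n2 := z) (n3 := 0) h hpos (by omega)
      (by omega) (by omega) (by omega) (by omega) (by omega) (by omega) (by omega) (by omega)
      (by omega)
    simpa using this
  · intro _
    have := sup_step4 (t := 1) (x := s) (n0 := x) (n1 := y) (n2 := z) (n3 := 0) h hpos (by omega)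
      (by omega) (by omega) (by omega) (by omega) (by omega) (by omega) (by omega) (by omega)
      (by omega)
    simpa using this

lemma three0 {p q s x y : ℕ} (hp : 2 ≤ p) (hq : 2 ≤ q) (hs : 2 ≤ s) (hsum : x + y = p + q + s)
    (hxy : y ≤ x) (hy2 : 2 ≤ y) (hy : y < p + q) (hxp : p + 1 ≤ x) (hxq : q ≤ x) (hxs : s ≤ x) :
    Sup [p, q, s] (sh x y 0 0) 1 ∧
    (p + 2 ≤ x → q + 1 ≤ x → y < x → Sup [p, q, s] (sh x y 0 0) 0) := by
  have hpos : ∀ y ∈ [p, q], 0 < y := by simp; omega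
  constructor
  · obtain ⟨m, m1, m2, m3, m4, m5, m6⟩ : ∃ m, 1 ≤ m ∧ p + q ≤ x + m ∧ m ≤ p ∧ m + 1 ≤ q ∧
        m + 1 ≤ y ∧ m + y ≤ p + q := by
      refine ⟨max 1 (p + q - x), ?_⟩
      omega
    have h := (two (q := q) (u := p + q - m) m1 m3 (by omega) (by omega)).2 (by omega)
    have := sup_step4 (t := 1) (x := s) (n0 := x) (n1 := y) (n2 := 0) (n3 := 0) h hpos (by omega)
      (by omega) (by omega) (by omega) (by omega) (by omega) (by omega) (by omega) (by omega)
      (by omega)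
    simpa using this
  · intro g1 g2 g3
    obtain ⟨m, m1, m2, m3, m4, m5, m6⟩ : ∃ m, 1 ≤ m ∧ p + q + 1 ≤ x + m ∧ m ≤ p ∧ m + 1 ≤ q ∧
        m + 1 ≤ y ∧ m + y ≤ p + q := by
      refine ⟨max 1 (p + q + 1 - x), ?_⟩
      omega
    have h := (two (q := q) (u := p + q - m) m1 m3 (by omega) (by omega)).2 (by omega)
    have := sup_step4 (t := 0) (x := s) (n0 := x) (n1 := y) (n2 := 0) (n3 := 0) h hpos (by omega)
      (by omega) (by omega) (by omega) (by omega) (by omega) (by omega) (by omega) (by omega)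
      (by omega)
    simpa using this

lemma two_range {A B A' B' lo hi : ℕ} (h1 : A ≤ B) (h2 : A' ≤ B') (h3 : lo ≤ hi)
    (h4 : A + A' ≤ hi) (h5 : lo ≤ B + B') :
    ∃ u v, A ≤ u ∧ u ≤ B ∧ A' ≤ v ∧ v ≤ B' ∧ lo ≤ u + v ∧ u + v ≤ hi := by
  refine ⟨max A (min B (lo - A')), max A' (lo - max A (min B (lo - A'))), ?_⟩
  omega

set_option maxHeartbeats 4000000 in
lemma four {p q s w x1 x2 x3 x4 : ℕ} (hp : 2 ≤ p) (hq : 2 ≤ q) (hs : 2 ≤ s) (hw : 2 ≤ w)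
    (hsum : x1 + x2 + x3 + x4 = p + q + s + w) (h12 : x2 ≤ x1) (h23 : x3 ≤ x2) (h34 : x4 ≤ x3)
    (g1 : p ≤ x1) (g2 : q ≤ x1) (g3 : s ≤ x1) (g4 : w ≤ x1)
    (e1 : x4 ≤ p) (e2 : x4 ≤ q) (e3 : x4 ≤ s) (e4 : x4 ≤ w)
    (d1 : x3 + x4 ≤ p + q) (d2 : x3 + x4 ≤ p + s) (d3 : x3 + x4 ≤ p + w)
    (d4 : x3 + x4 ≤ q + s) (d5 : x3 + x4 ≤ q + w) (d6 : x3 + x4 ≤ s + w)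
    (ht : x1 + 3 ≤ p + q + s + w)
    (c1 : p + 3 ≤ q + s + w) (c2 : q + 3 ≤ p + s + w) (c3 : s + 3 ≤ p + q + w)
    (c4 : w + 3 ≤ p + q + s)
    (f1 : p < s + w ∨ q < s + w) (f2 : p < q + w ∨ s < q + w) (f3 : p < q + s ∨ w < q + s)
    (f4 : q < p + w ∨ s < p + w) (f5 : q < p + s ∨ w < p + s) (f6 : s < p + q ∨ w < p + q) :
    ∃ t, Sup [p, q, s, w] (sh x1 x2 x3 x4) t := by
  have hpos : ∀ y ∈ [p, q, s], 0 < y := by simp; omega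
  rcases Nat.eq_zero_or_pos x4 with h4 | h4
  · subst h4
    rcases Nat.eq_zero_or_pos x3 with h3 | h3
    · subst h3
      -- two rows
      obtain ⟨v, v1, v2, v3, v4, v5, v6, v7, v8, v9⟩ : ∃ v, 2 ≤ v ∧ v + 1 ≤ x2 ∧ v + 1 ≤ p + q ∧
          p + q + s ≤ x1 + v ∧ v + x2 ≤ p + q + s ∧ v + 2 ≤ q + s ∧ v + 1 ≤ p + s ∧
          v ≤ p + q ∧ 2 * v < p + q + s := by
        refine ⟨max 2 (p + q + s - x1), ?_⟩
        omega
      have h := (three0 (x := p + q + s - v) (y := v) hp hq hs (by omega) (by omega) v1 (by omega)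
        (by omega) (by omega) (by omega)).2 (by omega) (by omega) (by omega)
      refine ⟨1, ?_⟩
      have := sup_step4 (t := 1) (x := w) (n0 := x1) (n1 := x2) (n2 := 0) (n3 := 0) h hpos
        (by omega) (by omega) (by omega) (by omega) (by omega) (by omega) (by omega) (by omega)
        (by omega) (by omega)
      simpa using this
    · by_cases hc : 2 ≤ x3 ∧ w + 1 ≤ x1
      · obtain ⟨u, v, u1, u2, v1, v2, l1, l2⟩ := two_range
          (A := 1) (B := min (x3 - 1) (min p (min q (s - 1)))) (A' := x3)
          (B' := min x2 (p + q - 1)) (lo := p + q + s - x1)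
          (hi := p + q + s - max x2 (max p (max q s))) (by omega) (by omega) (by omega)
          (by omega) (by omega)
        have h := (three (x := p + q + s - v - u) (y := v) (z := u) (s := s) hp hq (by omega)
          (by omega) (by omega) (by omega) (by omega) (by omega) (by omega) (by omega) (by omega)
          (by omega) (by omega)).2 (by omega)
        refine ⟨2, ?_⟩
        have := sup_step4 (t := 2) (x := w) (n0 := x1) (n1 := x2) (n2 := x3) (n3 := 0) h hpos
          (by omega) (by omega) (by omega) (by omega) (by omega) (by omega) (by omega) (by omega)
          (by omega) (by omega)
        simpa using this
      · obtain ⟨v, v1, v2, v3, v4, v5, v6, v7, v8, v9⟩ : ∃ v, 2 ≤ v ∧ v ≤ x2 ∧ v + 1 ≤ p + q ∧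
            p + q + s ≤ x1 + v ∧ v + x2 ≤ p + q + s ∧ v + 1 ≤ q + s ∧ v ≤ p + s ∧
            v ≤ p + q ∧ x3 ≤ v := by
          refine ⟨max 2 (max x3 (p + q + s - x1)), ?_⟩
          omega
        have h := (three0 (x := p + q + s - v) (y := v) hp hq hs (by omega) (by omega) v1
          (by omega) (by omega) (by omega) (by omega)).1
        refine ⟨2, ?_⟩
        have := sup_step4 (t := 2) (x := w) (n0 := x1) (n1 := x2) (n2 := x3) (n3 := 0) h hpos
          (by omega) (by omega) (by omega) (by omega) (by omega) (by omega) (by omega) (by omega)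
          (by omega) (by omega)
        simpa using this
  · obtain ⟨u, v, u1, u2, v1, v2, l1, l2⟩ := two_range
      (A := x4) (B := min x3 (min p (min q s))) (A' := x3)
      (B' := min x2 (p + q - 1)) (lo := p + q + s - x1)
      (hi := p + q + s - max x2 (max p (max q s))) (by omega) (by omega) (by omega)
      (by omega) (by omega)
    have h := (three (x := p + q + s - v - u) (y := v) (z := u) (s := s) hp hq (by omega)
      (by omega) (by omega) (by omega) (by omega) (by omega) (by omega) (by omega) (by omega)
      (by omega) (by omega)).1
    refine ⟨3, ?_⟩
    have := sup_step4 (t := 3) (x := w) (n0 := x1) (n1 := x2) (n2 := x3) (n3 := x4) h hpos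
      (by omega) (by omega) (by omega) (by omega) (by omega) (by omega) (by omega) (by omega)
      (by omega) (by omega)
    simpa using this



lemma sh_anti {x y z w : ℕ} (h1 : y ≤ x) (h2 : z ≤ y) (h3 : w ≤ z) :
    ∀ r, sh x y z w (r + 1) ≤ sh x y z w r := by
  intro r
  rcases r with _ | _ | _ | _ | r <;> simp [sh] <;> omega

lemma sh_zero {x y z w : ℕ} {r : ℕ} (h : 4 ≤ r) : sh x y z w r = 0 := by
  rcases r with _ | _ | _ | _ | r
  · omega
  · omega
  · omega
  · omega
  · rfl

lemma eq_sh {f : ℕ → ℕ} (h : ∀ r, 4 ≤ r → f r = 0) : f = sh (f 0) (f 1) (f 2) (f 3) := by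
  funext r
  rcases r with _ | _ | _ | _ | r
  · rfl
  · rfl
  · rfl
  · rfl
  · exact h _ (by omega)

lemma perm3 {p q s a b c : ℕ} (h : [p, q, s].Perm [a, b, c]) :
    (p = a ∧ q = b ∧ s = c) ∨ (p = a ∧ q = c ∧ s = b) ∨ (p = b ∧ q = a ∧ s = c) ∨
    (p = b ∧ q = c ∧ s = a) ∨ (p = c ∧ q = a ∧ s = b) ∨ (p = c ∧ q = b ∧ s = a) := by
  rw [← List.mem_permutations] at h
  simp [List.permutations, List.permutationsAux, List.permutationsAux.rec,
    List.permutationsAux2] at h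
  tauto

lemma part2_three {a b c : ℕ} (hab : b ≤ a) (hbc : c ≤ b) (hc : 2 ≤ c)
    (h : FullSupportConn [a, b, c]) : FullEquivClass [a, b, c] := by
  have hpos : ∀ x ∈ [a, b, c], 0 < x := by simp; omega
  rw [fullSupport_iff hpos (by simp)] at h
  have htri : a < b + c := by
    by_contra hcon
    obtain ⟨t, ht⟩ := h (sh a (b + c) 0 0) (sh_anti (by omega) (by omega) (by omega)) (by
      refine ⟨?_, ?_, ?_, ?_⟩
      · intro r hr
        simp at hr
        rcases r with _ | _ | _ | _ | r
        · omega
        · omega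
        · omega
        · rfl
        · rfl
      · simp [S, Finset.sum_range_succ, sh]
      · intro j hj
        simp at hj
        interval_cases j <;> simp [S, Finset.sum_range_succ, sh, F] <;> omega
      · simp [sh]; omega)
    have := (sup_cap ht hpos 1 (by simp)).1
    simp [sh] at this
  apply equiv_intro hpos (by simp)
  intro l hl f hf ⟨i1, i2, i3, i4⟩
  have hlen := hl.length_eq
  obtain ⟨p, q, s, rfl⟩ : ∃ p q s, l = [p, q, s] := by
    rw [List.length_eq_three.symm]; simpa using hlen
  have j1 := i3 1 (by simp)
  have j2 := i3 2 (by simp)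
  have k1 := hf 0
  have k2 := hf 1
  have k3 := i1 3 (by simp)
  have hP := perm3 hl
  clear hl
  rw [eq_sh (f := f) (fun r hr => i1 r (by simp; omega)), k3]
  simp [S, Finset.sum_range_succ, F] at i2 i4 j1 j2 k1 k2
  generalize f 0 = x at *
  generalize f 1 = y at *
  generalize f 2 = z at *
  clear i1 i3 hf h hlen hpos k3
  have hpq : 2 ≤ p ∧ 2 ≤ q ∧ 2 ≤ s ∧ x + y + z = p + q + s ∧ p ≤ x ∧ q ≤ x ∧ s ≤ x ∧
      z ≤ p ∧ z ≤ q ∧ z ≤ s ∧ p < q + s ∧ q < p + s ∧ s < p + q := by omega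
  clear hP
  obtain ⟨o1, o2, o3, o4, o5, o6, o7, o8, o9, o10, o11, o12, o13⟩ := hpq
  rcases Nat.eq_zero_or_pos z with hz | hz
  · subst hz
    exact ⟨1, (three0 o1 o2 o3 (by omega) (by omega) (by omega) (by omega) (by omega) (by omega)
      (by omega)).1⟩
  · exact ⟨2, (three o1 o2 o4 (by omega) (by omega) hz (by omega) o5 o6 o7 o8 o9 o10).1⟩

/-- A symmetric property of four numbers is invariant under rearrangement. -/
lemma perm4_sym {P : ℕ → ℕ → ℕ → ℕ → Prop} (h12 : ∀ a b c d, P a b c d → P b a c d)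
    (h23 : ∀ a b c d, P a b c d → P a c b d) (h34 : ∀ a b c d, P a b c d → P a b d c)
    {p q s w a b c d : ℕ} (h : [p, q, s, w].Perm [a, b, c, d]) (h0 : P a b c d) :
    P p q s w := by
  have key : ∀ l l' : List ℕ, l.Perm l' → ∀ r : List ℕ,
      (∀ a b c d, r ++ l' = [a, b, c, d] → P a b c d) →
      ∀ a b c d, r ++ l = [a, b, c, d] → P a b c d := by
    intro l l' hp
    induction hp with
    | nil => intro r h; exact h
    | cons x _ ih =>
      intro r h
      have := ih (r ++ [x])
      simp only [List.append_assoc, List.cons_append, List.nil_append] at this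
      exact this h
    | swap x y t =>
      intro r h a b c d e
      rcases r with _ | ⟨r1, _ | ⟨r2, _ | ⟨r3, r⟩⟩⟩
      · simp at e
        obtain ⟨rfl, rfl, rfl⟩ := e
        exact h12 _ _ _ _ (h _ _ _ _ rfl)
      · simp at e
        obtain ⟨rfl, rfl, rfl, rfl⟩ := e
        exact h23 _ _ _ _ (h _ _ _ _ rfl)
      · simp at e
        obtain ⟨rfl, rfl, rfl, rfl, rfl⟩ := e
        exact h34 _ _ _ _ (h _ _ _ _ rfl)
      · have := congrArg List.length e
        simp at this
        omega
    | trans _ _ ih1 ih2 =>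
      intro r h
      exact ih1 r (ih2 r h)
  refine key _ _ h [] ?_ p q s w rfl
  intro a' b' c' d' e
  simp at e
  obtain ⟨rfl, rfl, rfl, rfl⟩ := e
  exact h0

lemma four_nec {a b c d : ℕ} (hab : b ≤ a) (hbc : c ≤ b) (hcd : d ≤ c) (hd : 2 ≤ d)
    (h : FullSupportConn [a, b, c, d]) : a + 3 ≤ b + c + d ∧ b < c + d := by
  have hpos : ∀ x ∈ [a, b, c, d], 0 < x := by simp; omega
  rw [fullSupport_iff hpos (by simp)] at h
  have mk : ∀ x y z, y ≤ x → z ≤ y → x + y + z = a + b + c + d → a ≤ x → a + b ≤ x + y →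
      a + b + c ≤ x + y + z → x + 3 ≤ a + b + c + d →
      y + 2 ≤ b + c + d ∧ z + 1 ≤ c + d := by
    intro x y z q1 q2 q3 q4 q5 q6 q7
    obtain ⟨t, ht⟩ := h (sh x y z 0) (sh_anti (by omega) (by omega) (by omega)) (by
      refine ⟨?_, ?_, ?_, ?_⟩
      · intro r hr
        exact sh_zero (by simpa using hr)
      · simp [S, Finset.sum_range_succ, sh]; omega
      · intro j hj
        simp at hj
        interval_cases j <;> simp [S, Finset.sum_range_succ, sh, F] <;> omega
      · simp [sh]; omega)
    have e1 := (sup_cap ht hpos 1 (by simp)).1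
    have e2 := (sup_cap ht hpos 2 (by simp)).1
    simp [sh] at e1 e2
    omega
  have C1 : a + 3 ≤ b + c + d := by
    by_contra hcon
    by_cases hc : b + c + d ≤ a + 1
    · have := mk (a + 1) (b + c + d - 1) 0 (by omega) (by omega) (by omega) (by omega) (by omega)
        (by omega) (by omega)
      omega
    · have := mk (a + 1) (b + c + d - 1) 0 (by omega) (by omega) (by omega) (by omega) (by omega)
        (by omega) (by omega)
      omega
  have C2 : b < c + d := by
    by_contra hcon
    have := mk a b (c + d) (by omega) (by omega) (by omega) (by omega) (by omega)
        (by omega) (by omega)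
    omega
  exact ⟨C1, C2⟩

/-- The numerical conditions used for four rows. -/
def Cond4 (x1 x2 x3 x4 p q s w : ℕ) : Prop := (2 ≤ p ∧ 2 ≤ q ∧ 2 ≤ s ∧ 2 ≤ w) ∧
  (x1 + x2 + x3 + x4 = p + q + s + w) ∧ (p ≤ x1 ∧ q ≤ x1 ∧ s ≤ x1 ∧ w ≤ x1) ∧
  (x4 ≤ p ∧ x4 ≤ q ∧ x4 ≤ s ∧ x4 ≤ w) ∧
  (x3 + x4 ≤ p + q ∧ x3 + x4 ≤ p + s ∧ x3 + x4 ≤ p + w ∧ x3 + x4 ≤ q + s ∧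
    x3 + x4 ≤ q + w ∧ x3 + x4 ≤ s + w) ∧ x1 + 3 ≤ p + q + s + w ∧
  (p + 3 ≤ q + s + w ∧ q + 3 ≤ p + s + w ∧ s + 3 ≤ p + q + w ∧ w + 3 ≤ p + q + s) ∧
  (p < s + w ∨ q < s + w) ∧ (p < q + w ∨ s < q + w) ∧ (p < q + s ∨ w < q + s) ∧
  (q < p + w ∨ s < p + w) ∧ (q < p + s ∨ w < p + s) ∧ (s < p + q ∨ w < p + q)

lemma cond4_12 {x1 x2 x3 x4 : ℕ} (p q s w : ℕ) (h : Cond4 x1 x2 x3 x4 p q s w) :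
    Cond4 x1 x2 x3 x4 q p s w := by
  obtain ⟨⟨_, _, _, _⟩, _, ⟨_, _, _, _⟩, ⟨_, _, _, _⟩, ⟨_, _, _, _, _, _⟩, _,
    ⟨_, _, _, _⟩, _, _, _, _, _, _⟩ := h
  unfold Cond4
  and_intros <;> omega

lemma cond4_23 {x1 x2 x3 x4 : ℕ} (p q s w : ℕ) (h : Cond4 x1 x2 x3 x4 p q s w) :
    Cond4 x1 x2 x3 x4 p s q w := by
  obtain ⟨⟨_, _, _, _⟩, _, ⟨_, _, _, _⟩, ⟨_, _, _, _⟩, ⟨_, _, _, _, _, _⟩, _,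
    ⟨_, _, _, _⟩, _, _, _, _, _, _⟩ := h
  unfold Cond4
  and_intros <;> omega

lemma cond4_34 {x1 x2 x3 x4 : ℕ} (p q s w : ℕ) (h : Cond4 x1 x2 x3 x4 p q s w) :
    Cond4 x1 x2 x3 x4 p q w s := by
  obtain ⟨⟨_, _, _, _⟩, _, ⟨_, _, _, _⟩, ⟨_, _, _, _⟩, ⟨_, _, _, _, _, _⟩, _,
    ⟨_, _, _, _⟩, _, _, _, _, _, _⟩ := h
  unfold Cond4
  and_intros <;> omega

lemma cond4_base {x1 x2 x3 x4 a b c d : ℕ} (hab : b ≤ a) (hbc : c ≤ b) (hcd : d ≤ c) (hd : 2 ≤ d)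
    (C1 : a + 3 ≤ b + c + d) (C2 : b < c + d) (h0 : x1 + x2 + x3 + x4 = a + b + c + d)
    (h1 : a ≤ x1) (h2 : x3 + x4 ≤ c + d) (h3 : x4 ≤ d) (h4 : x1 + 3 ≤ a + b + c + d) :
    Cond4 x1 x2 x3 x4 a b c d := by
  unfold Cond4
  and_intros <;> omega

lemma part2_four {a b c d : ℕ} (hab : b ≤ a) (hbc : c ≤ b) (hcd : d ≤ c) (hd : 2 ≤ d)
    (h : FullSupportConn [a, b, c, d]) : FullEquivClass [a, b, c, d] := by
  have hpos : ∀ x ∈ [a, b, c, d], 0 < x := by simp; omega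
  obtain ⟨C1, C2⟩ := four_nec hab hbc hcd hd h
  apply equiv_intro hpos (by simp)
  intro l hl f hf ⟨i1, i2, i3, i4⟩
  have hlen := hl.length_eq
  obtain ⟨p, q, s, w, rfl⟩ : ∃ p q s w, l = [p, q, s, w] := by
    rcases l with _ | ⟨p, _ | ⟨q, _ | ⟨s, _ | ⟨w, _ | ⟨u, l⟩⟩⟩⟩⟩ <;> simp at hlen
    exact ⟨p, q, s, w, rfl⟩
  have j1 := i3 1 (by simp)
  have j2 := i3 2 (by simp)
  have j3 := i3 3 (by simp)
  have k1 := hf 0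
  have k2 := hf 1
  have k3 := hf 2
  rw [eq_sh (f := f) (fun r hr => i1 r (by simpa using hr))]
  simp [S, Finset.sum_range_succ, F] at i2 i4 j1 j2 j3 k1 k2 k3
  generalize f 0 = x1 at i2 i4 j1 j2 j3 k1 k2 k3 ⊢
  generalize f 1 = x2 at i2 i4 j1 j2 j3 k1 k2 k3 ⊢
  generalize f 2 = x3 at i2 i4 j1 j2 j3 k1 k2 k3 ⊢
  generalize f 3 = x4 at i2 i4 j1 j2 j3 k1 k2 k3 ⊢
  have hP := perm4_sym (P := Cond4 x1 x2 x3 x4) cond4_12 cond4_23 cond4_34 hl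
    (cond4_base hab hbc hcd hd C1 C2 (by omega) (by omega) (by omega) (by omega) (by omega))
  obtain ⟨⟨o1, o2, o3, o4⟩, o5, ⟨o6, o7, o8, o9⟩, ⟨e1, e2, e3, e4⟩,
    ⟨d1, d2, d3, d4, d5, d6⟩, ht, ⟨c1, c2, c3, c4⟩, f1, f2, f3, f4, f5, f6⟩ := hP
  exact four o1 o2 o3 o4 o5 k1 k2 k3 o6 o7 o8 o9 e1 e2 e3 e4 d1 d2 d3 d4 d5 d6 ht c1 c2 c3 c4
    f1 f2 f3 f4 f5 f6


/-- Theorem `fullequivschur`: if a partition `a` with parts ≥ 2 and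
`ℓ(a) ≥ 3` has full equivalence class then the connected ribbon `R_a` has full Schur support;
and when `ℓ(a) ≤ 4`, `a` has full equivalence class iff `R_a` has full Schur support. -/
theorem full_equivalence_class_implies_full_support
    (a : List ℕ) (ha : IsPartition a) (h2 : PartsGE a 2) (h3 : 3 ≤ a.length) :
    (FullEquivClass a → FullSupportConn a) ∧
    (a.length ≤ 4 → (FullEquivClass a ↔ FullSupportConn a)) := by
  refine ⟨part1 ha h2 h3, fun h4 => ⟨part1 ha h2 h3, fun hf => ?_⟩⟩
  rcases a with _ | ⟨p, _ | ⟨q, _ | ⟨s, _ | ⟨w, _ | ⟨u, l⟩⟩⟩⟩⟩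
  · simp at h3
  · simp at h3
  · simp at h3
  · have g := ha.1
    have g2 := h2 s (by simp)
    simp at g
    exact part2_three (by omega) (by omega) g2 hf
  · have g := ha.1
    have g2 := h2 w (by simp)
    simp at g
    exact part2_four (by omega) (by omega) (by omega) g2 hf
  · simp at h4
    omega

end RibbonSupport
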